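/- arXiv:2502.13296 — 2 statements merged into one kernel-verified Lean document; each statement's English description precedes it below -/
import Mathlib

section
/- For all positive integers dA, dB and every integer r with 1 ≤ r < min(dA,dB), and every density matrix ρ on ℂ^{dA}⊗ℂ^{dB} (indexed by Fin dA × Fin dB) with Schmidt number strictly greater than r, there exist a finite index set X × Y, density matrices ξ^x on ℂ^{dA} and ζ^y on ℂ^{dB}, and real coefficients γ_{x,y}, such that, defining for any matrix ρ' indexed by Fin dA × Fin dB and any effects M (indexed by Fin dA × Fin dA) and N (indexed by Fin dB × Fin dB) the payoff J(ρ'; M, N) = Σ_{x,y} γ_{x,y} · Tr[(M ⊗ N) · e((ξ^x)ᵀ ⊗ ρ' ⊗ (ζ^y)ᵀ)], the following hold: (i) J(σ; M, N) ≥ 0 for every pair of effects M, N and every density matrix σ with Schmidt number at most r; (ii) there exist effects M, N with J(ρ; M, N) < 0. -/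
open Matrix
open scoped Kronecker ComplexOrder

/-- The Schmidt rank of a bipartite vector `ψ : m × n → ℂ`, i.e. the rank of the
matrix `C_ψ` with `(C_ψ)_{ij} = ψ (i, j)`. -/
noncomputable def schmidtRank {m n : Type*} [Fintype m] [Fintype n] (ψ : m × n → ℂ) : ℕ :=
  (Matrix.of fun i j => ψ (i, j)).rank

/-- A matrix `ρ` indexed by `m × n` has Schmidt number at most `r` if it can be written
as `∑_k ψ_k ψ_k†` with each `ψ_k` of Schmidt rank at most `r`. -/
def SchmidtNumberLE {m n : Type*} [Fintype m] [Fintype n]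
    (ρ : Matrix (m × n) (m × n) ℂ) (r : ℕ) : Prop :=
  ∃ (k : ℕ) (ψ : Fin k → m × n → ℂ),
    (∀ i, schmidtRank (ψ i) ≤ r) ∧
    ρ = ∑ i, Matrix.vecMulVec (ψ i) (star (ψ i))

/-- The Schmidt number: the least `r` such that `SchmidtNumberLE ρ r`. -/
noncomputable def schmidtNumber {m n : Type*} [Fintype m] [Fintype n]
    (ρ : Matrix (m × n) (m × n) ℂ) : ℕ :=
  sInf {r | SchmidtNumberLE ρ r}

/-- A density matrix: positive semidefinite with unit trace. -/
def IsDensityMatrix {n : Type*} [Fintype n] (ρ : Matrix n n ℂ) : Prop :=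
  ρ.PosSemidef ∧ ρ.trace = 1

/-- An effect: a Hermitian matrix `M` with `0 ≤ M ≤ I`. -/
def IsEffect {n : Type*} [Fintype n] [DecidableEq n] (M : Matrix n n ℂ) : Prop :=
  M.PosSemidef ∧ (1 - M).PosSemidef

/-- The maximally entangled unit vector `|Φ⁺_d⟩ = (1/√d) ∑ᵢ e_{(i,i)}`. -/
noncomputable def maxEnt (d : ℕ) : Fin d × Fin d → ℂ :=
  fun p => if p.1 = p.2 then ((1 / Real.sqrt d : ℝ) : ℂ) else 0

/-- The projector `P_d = |Φ⁺_d⟩⟨Φ⁺_d|`. -/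
noncomputable def projME (d : ℕ) : Matrix (Fin d × Fin d) (Fin d × Fin d) ℂ :=
  Matrix.vecMulVec (maxEnt d) (star (maxEnt d))

/-- The isotropic state `ρ^iso_d(p) = p P_d + (1−p) I/d²`. -/
noncomputable def isoState (d : ℕ) (p : ℝ) : Matrix (Fin d × Fin d) (Fin d × Fin d) ℂ :=
  (p : ℂ) • projME d + (((1 - p) / (d ^ 2 : ℝ) : ℝ) : ℂ) • 1

/-- `|φ₂⁺⟩ = (1/√2)(e_{(0,0)} + e_{(1,1)}) ∈ ℂ⁸⊗ℂ⁸`. -/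
noncomputable def phi2 : Fin 8 × Fin 8 → ℂ :=
  fun q => if q = (0, 0) ∨ q = (1, 1) then ((1 / Real.sqrt 2 : ℝ) : ℂ) else 0

/-- `ρ̃(λ) = λ ρ^iso₈(0.24) + (1−λ)|φ₂⁺⟩⟨φ₂⁺|`. -/
noncomputable def rhoTilde (l : ℝ) : Matrix (Fin 8 × Fin 8) (Fin 8 × Fin 8) ℂ :=
  (l : ℂ) • isoState 8 0.24 + ((1 - l : ℝ) : ℂ) • Matrix.vecMulVec phi2 (star phi2)

/-- Reindexing `(i₀, ((i,j), j₀)) ↦ ((i₀, i), (j, j₀))`. -/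
def eIdx (dA dB : ℕ) :
    (Fin dA × ((Fin dA × Fin dB) × Fin dB)) ≃ (Fin dA × Fin dA) × (Fin dB × Fin dB) where
  toFun x := ((x.1, x.2.1.1), (x.2.1.2, x.2.2))
  invFun x := (x.1.1, ((x.1.2, x.2.1), x.2.2))
  left_inv x := rfl
  right_inv x := rfl

/-- The average payoff `J(ρ'; M, N) = ∑_{x,y} γ_{x,y} Tr[(M ⊗ N) · e((ξ^x)ᵀ ⊗ ρ' ⊗ (ζ^y)ᵀ)]`. -/
noncomputable def payoff {dA dB X Y : ℕ} (γ : Fin X → Fin Y → ℝ)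
    (ξ : Fin X → Matrix (Fin dA) (Fin dA) ℂ) (ζ : Fin Y → Matrix (Fin dB) (Fin dB) ℂ)
    (ρ' : Matrix (Fin dA × Fin dB) (Fin dA × Fin dB) ℂ)
    (M : Matrix (Fin dA × Fin dA) (Fin dA × Fin dA) ℂ)
    (N : Matrix (Fin dB × Fin dB) (Fin dB × Fin dB) ℂ) : ℂ :=
  ∑ x, ∑ y, (γ x y : ℂ) *
    Matrix.trace ((M ⊗ₖ N) *
      Matrix.reindex (eIdx dA dB) (eIdx dA dB) ((ξ x)ᵀ ⊗ₖ (ρ' ⊗ₖ (ζ y)ᵀ)))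

theorem sn_hsum {ι κ F : Type*} [Fintype ι] [Fintype κ] [AddCommMonoid F] (e : ι ↪ κ) (g : κ → F)
    (hg : ∀ j, (¬ ∃ i, e i = j) → g j = 0) : ∑ j, g j = ∑ i, g (e i) := by
  rw [← Finset.sum_map Finset.univ e g]
  symm
  apply Finset.sum_subset (Finset.subset_univ _)
  intro j _ hj
  apply hg
  simpa using hj

theorem sn_isCompact_convexHull {E : Type*} [NormedAddCommGroup E] [NormedSpace ℝ E]
    [FiniteDimensional ℝ E] {s : Set E} (hs : IsCompact s) : IsCompact (convexHull ℝ s) := by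
  classical
  rcases s.eq_empty_or_nonempty with rfl | ⟨s0, hs0⟩
  · simp
  set d := Module.finrank ℝ E + 1 with hd
  have key : convexHull ℝ s = (fun p : (Fin d → ℝ) × (Fin d → E) => ∑ i, p.1 i • p.2 i) ''
      (stdSimplex ℝ (Fin d) ×ˢ (Set.pi Set.univ fun _ => s)) := by
    apply Set.Subset.antisymm
    · intro x hx
      obtain ⟨ι, _, z, w, hz, hai, hw, hw1, hx⟩ := eq_pos_convex_span_of_mem_convexHull hx
      have hcard : Fintype.card ι ≤ Fintype.card (Fin d) := by
        have h1 := hai.card_le_finrank_succ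
        have h2 := Submodule.finrank_le (vectorSpan ℝ (Set.range z))
        simp only [Fintype.card_fin, hd]
        omega
      obtain ⟨e⟩ := Function.Embedding.nonempty_of_card_le hcard
      refine ⟨(Function.extend e w 0, Function.extend e z (fun _ => s0)), ⟨⟨?_, ?_⟩, ?_⟩, ?_⟩
      · intro j
        change 0 ≤ Function.extend e w 0 j
        by_cases h : ∃ i, e i = j
        · obtain ⟨i, rfl⟩ := h
          rw [e.injective.extend_apply]; exact (hw i).le
        · rw [Function.extend_apply' _ _ _ h]; simp
      · change ∑ j, Function.extend e w 0 j = 1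
        rw [sn_hsum e]
        · simp only [e.injective.extend_apply]; exact hw1
        · intro j h
          rw [Function.extend_apply' _ _ _ h]; simp
      · intro j _
        by_cases h : ∃ i, e i = j
        · obtain ⟨i, rfl⟩ := h
          simp only [e.injective.extend_apply]; exact hz ⟨i, rfl⟩
        · simp only [Function.extend_apply' _ _ _ h]; exact hs0
      · change ∑ j, Function.extend e w 0 j • Function.extend e z (fun _ => s0) j = x
        rw [sn_hsum e]
        · simp only [e.injective.extend_apply]; exact hx
        · intro j h
          rw [Function.extend_apply' _ _ _ h]; simp
    · rintro _ ⟨⟨w, z⟩, ⟨⟨hw0, hw1⟩, hz⟩, rfl⟩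
      exact (convex_convexHull ℝ s).sum_mem (fun i _ => hw0 i) hw1
        (fun i _ => subset_convexHull ℝ s (hz i trivial))
  rw [key]
  refine IsCompact.image ?_ (by fun_prop)
  exact (isCompact_stdSimplex ℝ (Fin d)).prod (isCompact_univ_pi fun _ => hs)

theorem sn_isClosed_rank {m n : Type*} [Fintype m] [Fintype n] (r : ℕ) :
    IsClosed {ψ : m × n → ℂ | schmidtRank ψ ≤ r} := by
  classical
  let L : (m × n → ℂ) →ₗ[ℂ] ((n → ℂ) →L[ℂ] (m → ℂ)) :=
    { toFun := fun ψ => LinearMap.toContinuousLinearMap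
        (Matrix.toLin' (Matrix.of fun i j => ψ (i, j)))
      map_add' := by
        intro x y
        ext i j
        simp [Matrix.mulVec, dotProduct, add_mul, Finset.sum_add_distrib]
      map_smul' := by
        intro c x
        ext i j
        simp [Matrix.mulVec, dotProduct, Finset.mul_sum, mul_assoc] }
  have hL : Continuous L := LinearMap.continuous_of_finiteDimensional L
  have := ((isOpen_setOfPred_nat_le_rank (𝕜 := ℂ) (E := n → ℂ) (F := m → ℂ)
    (r + 1)).preimage hL).isClosed_compl
  convert this using 1
  ext ψ
  have : ((L ψ : (n → ℂ) →L[ℂ] (m → ℂ)) : (n → ℂ) →ₗ[ℂ] (m → ℂ)).rank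
      = ((schmidtRank ψ : ℕ) : Cardinal) := by
    unfold LinearMap.rank schmidtRank Matrix.rank
    rw [Module.finrank_eq_rank]
    rfl
  simp only [Set.mem_ofPred_eq, Set.mem_compl_iff, Set.mem_preimage, this, Nat.cast_le]
  omega

theorem sn_smul {m n : Type*} [Fintype m] [Fintype n] (c : ℂ) (ψ : m × n → ℂ) :
    schmidtRank (c • ψ) ≤ schmidtRank ψ := by
  classical
  unfold schmidtRank
  have : (Matrix.of fun i j => (c • ψ) (i, j)) = (c • (1 : Matrix m m ℂ)) *
      (Matrix.of fun i j => ψ (i, j)) := by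
    ext i j; simp
  rw [this]
  exact Matrix.rank_mul_le_right _ _

theorem sn_add {m n : Type*} [Fintype m] [Fintype n] {ρ σ : Matrix (m × n) (m × n) ℂ} {r : ℕ}
    (h1 : SchmidtNumberLE ρ r) (h2 : SchmidtNumberLE σ r) : SchmidtNumberLE (ρ + σ) r := by
  obtain ⟨k, ψ, hψ, rfl⟩ := h1
  obtain ⟨l, φ, hφ, rfl⟩ := h2
  refine ⟨k + l, Fin.append ψ φ, ?_, ?_⟩
  · intro i
    refine Fin.addCases (fun i => ?_) (fun i => ?_) i
    · simpa using hψ i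
    · simpa using hφ i
  · rw [Fin.sum_univ_add]; simp

theorem sn_rsmul {m n : Type*} [Fintype m] [Fintype n] {ρ : Matrix (m × n) (m × n) ℂ} {r : ℕ}
    (h1 : SchmidtNumberLE ρ r) {a : ℝ} (ha : 0 ≤ a) : SchmidtNumberLE (a • ρ) r := by
  obtain ⟨k, ψ, hψ, rfl⟩ := h1
  refine ⟨k, fun i => ((Real.sqrt a : ℝ) : ℂ) • ψ i, fun i => (sn_smul _ _).trans (hψ i), ?_⟩
  rw [Finset.smul_sum]
  refine Finset.sum_congr rfl fun i _ => ?_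
  ext p q
  simp only [Matrix.smul_apply, vecMulVec_apply, Pi.smul_apply, Pi.star_apply, star_smul,
    smul_eq_mul, Complex.real_smul]
  have : (a : ℂ) = (Real.sqrt a : ℂ) * (Real.sqrt a : ℂ) := by
    rw [← Complex.ofReal_mul, Real.mul_self_sqrt ha]
  rw [this]
  simp
  ring

open scoped Matrix.Norms.Elementwise in
theorem sn_sep {m n : Type*} [Fintype m] [Fintype n] (r : ℕ) (ρ : Matrix (m × n) (m × n) ℂ)
    (hρ : IsDensityMatrix ρ) (hSN : ¬ SchmidtNumberLE ρ r) :
    ∃ F : Matrix (m × n) (m × n) ℂ →ₗ[ℂ] ℂ, (F ρ).re < 0 ∧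
      ∀ ψ : m × n → ℂ, schmidtRank ψ ≤ r → 0 ≤ (F (vecMulVec ψ (star ψ))).re := by
  classical
  let S0 : Set (m × n → ℂ) := {ψ | schmidtRank ψ ≤ r} ∩ {ψ | ∑ p, ‖ψ p‖ ^ 2 = 1}
  have hS0 : IsCompact S0 := by
    apply Metric.isCompact_of_isClosed_isBounded
    · exact (sn_isClosed_rank r).inter (isClosed_eq (by fun_prop) continuous_const)
    · refine (Metric.isBounded_closedBall (x := (0 : m × n → ℂ)) (r := 1)).subset ?_
      rintro ψ ⟨_, h⟩
      rw [mem_closedBall_zero_iff, pi_norm_le_iff_of_nonneg zero_le_one]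
      intro p
      have h1 : ‖ψ p‖ ^ 2 ≤ 1 := by
        rw [← h]
        exact Finset.single_le_sum (f := fun p => ‖ψ p‖ ^ 2) (fun _ _ => by positivity)
          (Finset.mem_univ p)
      have := norm_nonneg (ψ p)
      nlinarith
  let S : Set (Matrix (m × n) (m × n) ℂ) := (fun ψ => vecMulVec ψ (star ψ)) '' S0
  have hS : IsCompact S := by
    refine hS0.image ?_
    refine continuous_pi fun i => continuous_pi fun j => ?_
    simp only [vecMulVec_apply, Pi.star_apply]
    fun_prop
  have hK := sn_isCompact_convexHull hS
  have hsub : convexHull ℝ S ⊆ {H | SchmidtNumberLE H r} := by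
    apply convexHull_min
    · rintro _ ⟨ψ, hψ, rfl⟩
      exact ⟨1, fun _ => ψ, fun _ => hψ.1, by simp⟩
    · intro x hx y hy a b ha hb _
      exact sn_add (sn_rsmul hx ha) (sn_rsmul hy hb)
  obtain ⟨f, u, hf1, hf2⟩ := RCLike.geometric_hahn_banach_point_closed (𝕜 := ℂ)
    (convex_convexHull ℝ S) hK.isClosed (fun h => hSN (hsub h))
  refine ⟨(f : Matrix (m × n) (m × n) ℂ →ₗ[ℂ] ℂ) - (u : ℂ) • Matrix.traceLinearMap _ ℂ ℂ, ?_, ?_⟩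
  · simp [hρ.2]
    simpa using hf1
  · intro ψ hψ
    set t := ∑ p, ‖ψ p‖ ^ 2 with ht
    have ht0 : 0 ≤ t := by positivity
    have htr : (vecMulVec ψ (star ψ)).trace = (t : ℂ) := by
      rw [ht]
      simp [Matrix.trace, vecMulVec_apply, Complex.mul_conj, Complex.normSq_eq_norm_sq]
    rcases ht0.eq_or_lt with h | h
    · have : ψ = 0 := by
        ext p
        have := (Finset.sum_eq_zero_iff_of_nonneg (fun p _ => by positivity)).1 (ht.symm.trans h.symm) p
          (Finset.mem_univ p)
        simpa using this
      subst this
      simp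
    · let φ : m × n → ℂ := (((Real.sqrt t)⁻¹ : ℝ) : ℂ) • ψ
      have hφ : φ ∈ S0 := by
        refine ⟨(sn_smul _ _).trans hψ, ?_⟩
        simp only [φ, Set.mem_ofPred_eq, Pi.smul_apply, norm_smul, mul_pow, ← Finset.mul_sum, ← ht]
        rw [Complex.norm_real, Real.norm_eq_abs, sq_abs, inv_pow, Real.sq_sqrt ht0]
        field_simp
      have h2 := hf2 _ (subset_convexHull ℝ S ⟨φ, hφ, rfl⟩)
      have h3 : vecMulVec ψ (star ψ) = (t : ℂ) • vecMulVec φ (star φ) := by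
        ext p q
        have : (t : ℂ) * ((((Real.sqrt t)⁻¹ : ℝ) : ℂ) * (((Real.sqrt t)⁻¹ : ℝ) : ℂ)) = 1 := by
          rw [← Complex.ofReal_mul, ← Complex.ofReal_mul, ← mul_inv, Real.mul_self_sqrt ht0,
            mul_inv_cancel₀ h.ne', Complex.ofReal_one]
        simp only [φ, Matrix.smul_apply, vecMulVec_apply, Pi.smul_apply, Pi.star_apply, star_smul,
          smul_eq_mul]
        rw [show star ((((Real.sqrt t)⁻¹ : ℝ) : ℂ)) = (((Real.sqrt t)⁻¹ : ℝ) : ℂ) from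
          Complex.conj_ofReal _]
        linear_combination (-(ψ p * star (ψ q))) * this
      rw [LinearMap.sub_apply, LinearMap.smul_apply, Matrix.traceLinearMap_apply, htr, h3, map_smul]
      have h4 : u < (f (vecMulVec φ (star φ))).re := h2
      simp only [smul_eq_mul, ContinuousLinearMap.coe_coe, Complex.sub_re, Complex.re_ofReal_mul,
        Complex.ofReal_re]
      nlinarith

open scoped MatrixOrder in
open scoped Matrix.Norms.L2Operator in
theorem sn_span_density (n : Type*) [Fintype n] [DecidableEq n] :
    Submodule.span ℂ {D : Matrix n n ℂ | IsDensityMatrix D} = ⊤ := by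
  rw [eq_top_iff, ← CStarAlgebra.span_nonneg (A := Matrix n n ℂ), Submodule.span_le]
  intro P hP
  have hP : P.PosSemidef := Matrix.nonneg_iff_posSemidef.1 hP
  by_cases h : P.trace = 0
  · rw [hP.trace_eq_zero_iff] at h
    rw [h]; exact Submodule.zero_mem _
  · have : P = P.trace • (P.trace⁻¹ • P) := by
      rw [smul_smul, mul_inv_cancel₀ h, one_smul]
    rw [this]
    apply Submodule.smul_mem
    apply Submodule.subset_span
    refine ⟨hP.smul ?_, ?_⟩
    · exact inv_nonneg.2 hP.trace_nonneg
    · simp [h]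

theorem sn_family (n : Type*) [Fintype n] [DecidableEq n] :
    ∃ (X : ℕ) (ξ : Fin X → Matrix n n ℂ), (∀ x, IsDensityMatrix (ξ x)) ∧
      Submodule.span ℂ (Set.range ξ) = ⊤ := by
  obtain ⟨s, hs, h⟩ := (Submodule.fg_span_iff_fg_span_finset_subset (R := ℂ)
    {D : Matrix n n ℂ | IsDensityMatrix D}).1 (IsNoetherian.noetherian _)
  rw [sn_span_density] at h
  refine ⟨s.card, fun x => (s.equivFin.symm x : Matrix n n ℂ), fun x => hs (s.equivFin.symm x).2, ?_⟩
  rw [h]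
  congr 1
  ext D
  constructor
  · rintro ⟨x, rfl⟩; exact (s.equivFin.symm x).2
  · intro hD; exact ⟨s.equivFin ⟨D, hD⟩, by simp⟩

theorem sn_kron_span {m n : Type*} [Fintype m] [Fintype n] [DecidableEq m] [DecidableEq n]
    {X Y : ℕ} (ξ : Fin X → Matrix m m ℂ) (ζ : Fin Y → Matrix n n ℂ)
    (hξ : Submodule.span ℂ (Set.range ξ) = ⊤) (hζ : Submodule.span ℂ (Set.range ζ) = ⊤)
    (A : Matrix (m × n) (m × n) ℂ) :
    ∃ c : Fin X → Fin Y → ℂ, A = ∑ x, ∑ y, c x y • (ξ x ⊗ₖ ζ y) := by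
  have hA : A ∈ Submodule.span ℂ (Set.range fun p : Fin X × Fin Y => ξ p.1 ⊗ₖ ζ p.2) := by
    have h1 := Submodule.map₂_span_span ℂ (kroneckerBilinear (R := ℂ) (α := ℂ) (l := m) (m := m)
      (n := n) (p := n)) (Set.range ξ) (Set.range ζ)
    have h2 : Set.image2 (fun a b => kroneckerBilinear (R := ℂ) (α := ℂ) (l := m) (m := m)
      (n := n) (p := n) a b) (Set.range ξ) (Set.range ζ) =
        Set.range fun p : Fin X × Fin Y => ξ p.1 ⊗ₖ ζ p.2 := by
      rw [Set.image2_range]; rfl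
    rw [← h2, ← h1, hξ, hζ, Matrix.matrix_eq_sum_single A]
    refine Submodule.sum_mem _ fun p _ => Submodule.sum_mem _ fun q _ => ?_
    have h3 : Matrix.single p q (A p q) = kroneckerBilinear (R := ℂ) (α := ℂ) (l := m) (m := m)
      (n := n) (p := n) (Matrix.single p.1 q.1 (A p q)) (Matrix.single p.2 q.2 1) := by
      change _ = Matrix.single p.1 q.1 (A p q) ⊗ₖ Matrix.single p.2 q.2 1
      rw [Matrix.single_kronecker_single]; simp
    rw [h3]
    exact Submodule.apply_mem_map₂ _ Submodule.mem_top Submodule.mem_top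
  obtain ⟨c, hc⟩ := (Submodule.mem_span_range_iff_exists_fun ℂ).1 hA
  refine ⟨fun x y => c (x, y), ?_⟩
  rw [← hc, Fintype.sum_prod_type]

theorem sn_functional {ι : Type*} [Fintype ι] [DecidableEq ι] (F : Matrix ι ι ℂ →ₗ[ℂ] ℂ) :
    ∃ A : Matrix ι ι ℂ, ∀ φ : ι → ℂ, F (vecMulVec φ (star φ)) = star φ ⬝ᵥ A *ᵥ φ := by
  refine ⟨Matrix.of fun q p => F (Matrix.single p q 1), fun φ => ?_⟩
  conv_lhs => rw [Matrix.matrix_eq_sum_single (vecMulVec φ (star φ))]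
  simp only [map_sum, dotProduct, mulVec, Finset.mul_sum, Matrix.of_apply]
  rw [Finset.sum_comm]
  refine Finset.sum_congr rfl fun q _ => Finset.sum_congr rfl fun p _ => ?_
  have : Matrix.single p q (vecMulVec φ (star φ) p q) = (φ p * star (φ q)) • Matrix.single p q 1 := by
    simp [vecMulVec_apply]
  rw [this, map_smul, smul_eq_mul, Pi.star_apply]
  ring

/-- the filtered vector -/
noncomputable def snFilter {dA dB : ℕ} (m : Fin dA × Fin dA → ℂ) (n : Fin dB × Fin dB → ℂ)
    (ψ : Fin dA × Fin dB → ℂ) : Fin dA × Fin dB → ℂ :=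
  fun p => ((Matrix.of fun a b => star (m (a, b))) * (Matrix.of fun a b => ψ (a, b)) *
    (Matrix.of fun a b => star (n (a, b)))) p.1 p.2

theorem snFilter_rank {dA dB : ℕ} (m : Fin dA × Fin dA → ℂ) (n : Fin dB × Fin dB → ℂ)
    (ψ : Fin dA × Fin dB → ℂ) : schmidtRank (snFilter m n ψ) ≤ schmidtRank ψ := by
  have h : (Matrix.of fun i j => snFilter m n ψ (i, j)) =
      (Matrix.of fun a b => star (m (a, b))) * (Matrix.of fun a b => ψ (a, b)) *
        (Matrix.of fun a b => star (n (a, b))) := by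
    ext i j
    simp only [Matrix.of_apply, snFilter]
  unfold schmidtRank
  rw [h]
  exact (Matrix.rank_mul_le_left _ _).trans (Matrix.rank_mul_le_right _ _)

theorem snFilter_eq {dA dB : ℕ} (m : Fin dA × Fin dA → ℂ) (n : Fin dB × Fin dB → ℂ)
    (ψ : Fin dA × Fin dB → ℂ) (p : Fin dA × Fin dB) : snFilter m n ψ p =
      ∑ q : Fin dA × Fin dB, star (m (p.1, q.1)) * ψ q * star (n (q.2, p.2)) := by
  simp only [snFilter, Matrix.mul_apply, Matrix.of_apply, Finset.sum_mul, Fintype.sum_prod_type]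
  rw [Finset.sum_comm]

theorem sn_trace {dA dB : ℕ} (m : Fin dA × Fin dA → ℂ) (n : Fin dB × Fin dB → ℂ)
    (ψ : Fin dA × Fin dB → ℂ) (ξ : Matrix (Fin dA) (Fin dA) ℂ) (ζ : Matrix (Fin dB) (Fin dB) ℂ) :
    Matrix.trace ((vecMulVec m (star m) ⊗ₖ vecMulVec n (star n)) *
      Matrix.reindex (eIdx dA dB) (eIdx dA dB) (ξᵀ ⊗ₖ (vecMulVec ψ (star ψ) ⊗ₖ ζᵀ))) =
    star (snFilter m n ψ) ⬝ᵥ (ξ ⊗ₖ ζ) *ᵥ (snFilter m n ψ) := by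
  have e1 : ∀ g : (Fin dA × Fin dA) × (Fin dB × Fin dB) → ℂ,
      ∑ x, g x = ∑ s : Fin dA × Fin dB, ∑ t : Fin dA × Fin dB, g ((s.1, t.1), (t.2, s.2)) := by
    intro g
    rw [← Fintype.sum_prod_type' (f := fun (s t : Fin dA × Fin dB) => g ((s.1, t.1), (t.2, s.2)))]
    exact Fintype.sum_equiv
      ⟨fun x => ((x.1.1, x.2.2), (x.1.2, x.2.1)), fun y => ((y.1.1, y.2.1), (y.2.2, y.1.2)),
        fun _ => rfl, fun _ => rfl⟩ _ _ (fun _ => rfl)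
  simp only [Matrix.trace, Matrix.diag, Matrix.mul_apply, e1, dotProduct, mulVec, Pi.star_apply,
    snFilter_eq, star_sum, Finset.sum_mul, Finset.mul_sum]
  refine Finset.sum_congr rfl fun s _ => ?_
  rw [Finset.sum_comm]
  refine Finset.sum_congr rfl fun s' _ => ?_
  rw [Finset.sum_comm]
  refine Finset.sum_congr rfl fun t' _ => ?_
  refine Finset.sum_congr rfl fun t _ => ?_
  simp [eIdx, vecMulVec_apply]
  ring

theorem sn_payoff {dA dB X Y : ℕ} (γ : Fin X → Fin Y → ℝ)
    (ξ : Fin X → Matrix (Fin dA) (Fin dA) ℂ) (ζ : Fin Y → Matrix (Fin dB) (Fin dB) ℂ)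
    {k l o : ℕ} (ψ : Fin k → Fin dA × Fin dB → ℂ) (m : Fin l → Fin dA × Fin dA → ℂ)
    (n : Fin o → Fin dB × Fin dB → ℂ) :
    payoff γ ξ ζ (∑ i, vecMulVec (ψ i) (star (ψ i))) (∑ a, vecMulVec (m a) (star (m a)))
      (∑ b, vecMulVec (n b) (star (n b))) =
    ∑ a, ∑ b, ∑ i, ∑ x, ∑ y, (γ x y : ℂ) *
      (star (snFilter (m a) (n b) (ψ i)) ⬝ᵥ (ξ x ⊗ₖ ζ y) *ᵥ (snFilter (m a) (n b) (ψ i))) := by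
  have hT : ∀ x y, Matrix.trace (((∑ a, vecMulVec (m a) (star (m a))) ⊗ₖ
      (∑ b, vecMulVec (n b) (star (n b)))) * Matrix.reindex (eIdx dA dB) (eIdx dA dB)
        ((ξ x)ᵀ ⊗ₖ ((∑ i, vecMulVec (ψ i) (star (ψ i))) ⊗ₖ (ζ y)ᵀ))) =
      ∑ a, ∑ b, ∑ i, (star (snFilter (m a) (n b) (ψ i)) ⬝ᵥ
        (ξ x ⊗ₖ ζ y) *ᵥ (snFilter (m a) (n b) (ψ i))) := by
    intro x y
    have h1 : ((∑ a, vecMulVec (m a) (star (m a))) ⊗ₖ (∑ b, vecMulVec (n b) (star (n b)))) =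
        ∑ a, ∑ b, (vecMulVec (m a) (star (m a)) ⊗ₖ vecMulVec (n b) (star (n b))) := by
      ext p q
      simp only [Matrix.kroneckerMap_apply, Matrix.sum_apply, Finset.sum_mul_sum]
    have h2 : Matrix.reindex (eIdx dA dB) (eIdx dA dB)
        ((ξ x)ᵀ ⊗ₖ ((∑ i, vecMulVec (ψ i) (star (ψ i))) ⊗ₖ (ζ y)ᵀ)) =
        ∑ i, Matrix.reindex (eIdx dA dB) (eIdx dA dB)
          ((ξ x)ᵀ ⊗ₖ (vecMulVec (ψ i) (star (ψ i)) ⊗ₖ (ζ y)ᵀ)) := by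
      ext p q
      simp only [Matrix.reindex_apply, Matrix.submatrix_apply, Matrix.kroneckerMap_apply,
        Matrix.sum_apply, Finset.sum_mul, Finset.mul_sum]
    rw [h1, h2]
    simp only [Finset.sum_mul, Finset.mul_sum, Matrix.trace_sum, sn_trace]
    rw [Finset.sum_comm]
    refine Finset.sum_congr rfl fun a _ => ?_
    rw [Finset.sum_comm]
  unfold payoff
  simp only [hT]
  simp only [Finset.mul_sum]
  have c3 : ∀ (f : Fin X → Fin Y → Fin l → Fin o → Fin k → ℂ),
      ∑ x, ∑ y, ∑ a, ∑ b, ∑ i, f x y a b i = ∑ a, ∑ b, ∑ i, ∑ x, ∑ y, f x y a b i := by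
    intro f
    have h : ∀ g : Fin X → Fin Y → ℂ, ∑ x, ∑ y, g x y = ∑ p : Fin X × Fin Y, g p.1 p.2 :=
      fun g => (Fintype.sum_prod_type' g).symm
    simp only [h]
    rw [Finset.sum_comm]
    refine Finset.sum_congr rfl fun a _ => ?_
    rw [Finset.sum_comm]
    refine Finset.sum_congr rfl fun b _ => ?_
    rw [Finset.sum_comm]
  exact c3 _

theorem sn_maxEnt_norm {d : ℕ} (hd : 0 < d) : star (maxEnt d) ⬝ᵥ maxEnt d = 1 := by
  have : ((1 / Real.sqrt d : ℝ) : ℂ) * ((1 / Real.sqrt d : ℝ) : ℂ) = 1 / d := by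
    rw [← Complex.ofReal_mul, div_mul_div_comm, Real.mul_self_sqrt (by positivity)]; simp
  have hd' : (d : ℂ) ≠ 0 := by exact_mod_cast hd.ne'
  have h : ∀ p : Fin d × Fin d, star (maxEnt d p) * maxEnt d p = if p.1 = p.2 then 1 / (d : ℂ) else 0 := by
    intro p
    unfold maxEnt
    split_ifs
    · rw [← this]; congr 1; exact Complex.conj_ofReal _
    · simp
  simp only [dotProduct, Pi.star_apply, h, Fintype.sum_prod_type]
  simp [hd']

theorem sn_maxEnt_effect {d : ℕ} (hd : 0 < d) : IsEffect (projME d) := by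
  refine ⟨posSemidef_vecMulVec_self_star _, ?_⟩
  have hH : (projME d)ᴴ = projME d := (posSemidef_vecMulVec_self_star (maxEnt d)).1
  have hI : projME d * projME d = projME d := by
    unfold projME
    rw [vecMulVec_mul_vecMulVec, sn_maxEnt_norm hd]
    simp
  have : 1 - projME d = (1 - projME d)ᴴ * (1 - projME d) := by
    rw [conjTranspose_sub, hH, conjTranspose_one, mul_sub, sub_mul, sub_mul, hI]
    simp
  rw [this]
  exact posSemidef_conjTranspose_mul_self _

theorem sn_filter_maxEnt {dA dB : ℕ} (ψ : Fin dA × Fin dB → ℂ) :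
    snFilter (maxEnt dA) (maxEnt dB) ψ =
      ((1 / Real.sqrt dA * (1 / Real.sqrt dB) : ℝ) : ℂ) • ψ := by
  ext p
  have h : ∀ (d : ℕ) (a b : Fin d), star (maxEnt d (a, b)) =
      if a = b then ((1 / Real.sqrt d : ℝ) : ℂ) else 0 := by
    intro d a b
    unfold maxEnt
    dsimp only
    split_ifs
    · exact Complex.conj_ofReal _
    · simp
  rw [snFilter_eq]
  simp only [h, Fintype.sum_prod_type]
  simp
  ring

/-- Theorem 2, MDI Schmidt number certification: for every density matrix
`ρ` with Schmidt number strictly greater than `r there is a semiquantum nonlocal game,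
built from trusted quantum inputs `ξ^x, ζ^y` and real coefficients `γ_{x,y}`, whose payoff
is nonnegative on all states with Schmidt number at most `r` for all effects, but is
strictly negative on `ρ` for some pair of effects. -/
theorem mdi_schmidt_number_certification (dA dB : ℕ) (r : ℕ)
    (hdA : 0 < dA) (hdB : 0 < dB) (hr1 : 1 ≤ r) (hr2 : r < min dA dB)
    (ρ : Matrix (Fin dA × Fin dB) (Fin dA × Fin dB) ℂ)
    (hρ : IsDensityMatrix ρ) (hSN : ¬ SchmidtNumberLE ρ r) :
    ∃ (X Y : ℕ) (ξ : Fin X → Matrix (Fin dA) (Fin dA) ℂ)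
      (ζ : Fin Y → Matrix (Fin dB) (Fin dB) ℂ) (γ : Fin X → Fin Y → ℝ),
      (∀ x, IsDensityMatrix (ξ x)) ∧
      (∀ y, IsDensityMatrix (ζ y)) ∧
      (∀ σ : Matrix (Fin dA × Fin dB) (Fin dA × Fin dB) ℂ,
        IsDensityMatrix σ → SchmidtNumberLE σ r →
        ∀ M N, IsEffect M → IsEffect N → 0 ≤ payoff γ ξ ζ σ M N) ∧
      (∃ M N, IsEffect M ∧ IsEffect N ∧ payoff γ ξ ζ ρ M N < 0) := by

  classical
  obtain ⟨F, hF1, hF2⟩ := sn_sep r ρ hρ hSN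
  obtain ⟨A, hA⟩ := sn_functional F
  obtain ⟨X, ξ, hξ, hξs⟩ := sn_family (Fin dA)
  obtain ⟨Y, ζ, hζ, hζs⟩ := sn_family (Fin dB)
  obtain ⟨c, hc⟩ := sn_kron_span ξ ζ hξs hζs A
  have key : ∀ φ : Fin dA × Fin dB → ℂ, ∑ x, ∑ y, (((c x y).re : ℝ) : ℂ) *
      (star φ ⬝ᵥ (ξ x ⊗ₖ ζ y) *ᵥ φ) = (((F (vecMulVec φ (star φ))).re : ℝ) : ℂ) := by
    intro φ
    have hr : ∀ x y, ((star φ ⬝ᵥ (ξ x ⊗ₖ ζ y) *ᵥ φ).re : ℂ) = star φ ⬝ᵥ (ξ x ⊗ₖ ζ y) *ᵥ φ := by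
      intro x y
      have h0 := ((hξ x).1.kronecker (hζ y).1).dotProduct_mulVec_nonneg φ
      have := (Complex.nonneg_iff.1 h0).2
      apply Complex.ext <;> simp [← this]
    have hF : F (vecMulVec φ (star φ)) =
        ∑ x, ∑ y, c x y * (star φ ⬝ᵥ (ξ x ⊗ₖ ζ y) *ᵥ φ) := by
      rw [hA, hc]
      simp only [Matrix.sum_mulVec, dotProduct_sum, Matrix.smul_mulVec, dotProduct_smul,
        smul_eq_mul]
    rw [hF]
    simp only [Complex.re_sum, Complex.ofReal_sum]
    refine Finset.sum_congr rfl fun x _ => Finset.sum_congr rfl fun y _ => ?_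
    rw [← hr x y]
    rw [Complex.re_mul_ofReal]
    push_cast
    rfl
  refine ⟨X, Y, ξ, ζ, fun x y => (c x y).re, hξ, hζ, ?_, ?_⟩
  · rintro σ - ⟨k, ψ, hψ, rfl⟩ M N hM hN
    obtain ⟨l, m, rfl⟩ := Matrix.posSemidef_iff_eq_sum_vecMulVec.1 hM.1
    obtain ⟨o, n, rfl⟩ := Matrix.posSemidef_iff_eq_sum_vecMulVec.1 hN.1
    rw [sn_payoff]
    refine Finset.sum_nonneg fun a _ => Finset.sum_nonneg fun b _ => Finset.sum_nonneg fun i _ => ?_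
    rw [key]
    exact Complex.zero_le_real.2 (hF2 _ ((snFilter_rank _ _ _).trans (hψ i)))
  · refine ⟨projME dA, projME dB, sn_maxEnt_effect hdA, sn_maxEnt_effect hdB, ?_⟩
    obtain ⟨k, ψ, hψ⟩ := Matrix.posSemidef_iff_eq_sum_vecMulVec.1 hρ.1
    have hp := sn_payoff (fun x y => (c x y).re) ξ ζ ψ (fun _ : Fin 1 => maxEnt dA)
      (fun _ : Fin 1 => maxEnt dB)
    simp only [Finset.univ_unique, Finset.sum_singleton, ← hψ, key, sn_filter_maxEnt] at hp
    unfold projME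
    rw [hp]
    set s : ℝ := 1 / Real.sqrt dA * (1 / Real.sqrt dB) with hs
    have hs0 : 0 < s := by positivity
    have hv : ∀ φ : Fin dA × Fin dB → ℂ, vecMulVec ((s : ℂ) • φ) (star ((s : ℂ) • φ)) =
        ((s * s : ℝ) : ℂ) • vecMulVec φ (star φ) := by
      intro φ
      ext p q
      simp only [Matrix.smul_apply, vecMulVec_apply, Pi.smul_apply, Pi.star_apply, star_smul,
          smul_eq_mul]
      rw [show star (s : ℂ) = (s : ℂ) from Complex.conj_ofReal _]
      push_cast
      ring
    simp only [hv, map_smul, smul_eq_mul, Complex.re_ofReal_mul]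
    rw [← Complex.ofReal_sum, ← Finset.mul_sum, ← Complex.re_sum, ← map_sum, ← hψ]
    exact_mod_cast mul_neg_of_pos_of_neg (mul_pos hs0 hs0) hF1
end

section
/- For every real λ with 0 < λ < 0.312, the state ρ̃(λ) on ℂ⁸⊗ℂ⁸ has SN(ρ̃(λ)) = 3 and is Bell-nonlocal, yet for all finite families of dichotomic POVMs {E_x, I − E_x} on ℂ⁸ (x ∈ X finite, 0 ≤ E_x ≤ I) and {F_y, I − F_y} on ℂ⁸ (y ∈ Y finite, 0 ≤ F_y ≤ I), there exist a finite set Λ, weights q_μ ≥ 0 with Σ_μ q_μ = 1, and conditional probability distributions P(a|x,μ), Q(b|y,μ) with a, b ∈ {0,1}, such that for all a, b, x, y, denoting E_x^0 = E_x, E_x^1 = I − E_x, F_y^0 = F_y, F_y^1 = I − F_y: Tr[(E_x^a ⊗ F_y^b) ρ̃(λ)] = λ Σ_μ q_μ P(a|x,μ) Q(b|y,μ) + (1−λ) ⟨φ₂⁺| (E_x^a ⊗ F_y^b) |φ₂⁺⟩; hence the correlations of ρ̃(λ) in any two-output Bell-nonlocal game, even with arbitrary POVMs, can be simulated using shared randomness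 and a Schmidt-rank-2 state. -/
open Matrix
open scoped Kronecker ComplexOrder

/-- A dichotomic (±1-valued) observable: Hermitian with `−I ≤ A ≤ I`. -/
def IsDichotomicObservable {n : Type*} [Fintype n] [DecidableEq n]
    (A : Matrix n n ℂ) : Prop :=
  Aᴴ = A ∧ (1 - A).PosSemidef ∧ (1 + A).PosSemidef

section Gauss
open MeasureTheory

noncomputable def gden (z : ℂ) : ℝ := Real.pi⁻¹ * Real.exp (-‖z‖ ^ 2)

lemma gden_nonneg (z : ℂ) : 0 ≤ gden z := by unfold gden; positivity

lemma gden_cont : Continuous gden := by unfold gden; fun_prop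

noncomputable def gam : Measure ℂ := volume.withDensity (fun z => ENNReal.ofReal (gden z))

lemma tail_integral (a : ℝ) :
    IntegrableOn (fun y : ℝ => y * Real.exp (-y ^ 2)) (Set.Ioi a) ∧
    (∫ y in Set.Ioi a, y * Real.exp (-y ^ 2)) = Real.exp (-a^2) / 2 := by
  have hint : Integrable (fun y : ℝ => y * Real.exp (-y ^ 2)) := by
    simpa using integrable_mul_exp_neg_mul_sq (b := 1) one_pos
  refine ⟨hint.integrableOn, ?_⟩
  have hd : ∀ x ∈ Set.Ici a, HasDerivAt (fun y : ℝ => -(Real.exp (-y^2) / 2)) (x * Real.exp (-x^2)) x := by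
    intro x _
    have h1 : HasDerivAt (fun y : ℝ => -y^2) (-(2 * x)) x := by
      have := (hasDerivAt_pow 2 x).fun_neg
      simpa using this
    have h2 := (h1.exp.div_const 2).fun_neg
    have e : -(Real.exp (-x ^ 2) * -(2 * x) / 2) = x * Real.exp (-x^2) := by ring
    rwa [e] at h2
  have ht : Filter.Tendsto (fun y : ℝ => -(Real.exp (-y^2) / 2)) Filter.atTop (nhds 0) := by
    have h1 : Filter.Tendsto (fun y : ℝ => -y^2) Filter.atTop Filter.atBot :=
      Filter.tendsto_neg_atTop_atBot.comp (Filter.tendsto_pow_atTop (by norm_num))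
    have := ((Real.tendsto_exp_atBot.comp h1).div_const 2).neg
    simpa using this
  rw [integral_Ioi_of_hasDerivAt_of_tendsto' hd hint.integrableOn ht]
  ring

lemma gam_tail (t : ℝ) (ht : 0 ≤ t) : gam {z | t < ‖z‖ ^ 2} = ENNReal.ofReal (Real.exp (-t)) := by
  have hmeas : MeasurableSet {z : ℂ | t < ‖z‖ ^ 2} :=
    measurableSet_lt measurable_const (by fun_prop)
  unfold gam
  rw [withDensity_apply _ hmeas, ← lintegral_indicator hmeas]
  set f : ℝ → ℝ := (Set.Ioi (Real.sqrt t)).indicator (fun y => Real.pi⁻¹ * Real.exp (-y ^ 2)) with hf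
  have hfz : ∀ z : ℂ, {z : ℂ | t < ‖z‖ ^ 2}.indicator (fun z => ENNReal.ofReal (gden z)) z
      = ENNReal.ofReal (f ‖z‖) := by
    intro z
    by_cases h : t < ‖z‖ ^ 2
    · have h' : Real.sqrt t < ‖z‖ := by
        rw [Real.sqrt_lt' ]; exact h
        by_contra h0
        have : ‖z‖ = 0 := le_antisymm (not_lt.mp h0) (norm_nonneg z)
        rw [this] at h; norm_num at h; linarith
      rw [Set.indicator_of_mem (by exact h), hf, Set.indicator_of_mem (by exact h')]
      rfl
    · have h' : ¬ Real.sqrt t < ‖z‖ := by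
        rw [not_lt]
        exact Real.le_sqrt_of_sq_le (not_lt.mp h)
      rw [Set.indicator_of_notMem (by exact h), hf, Set.indicator_of_notMem (by exact h')]
      simp
  simp_rw [hfz]
  have key : ∀ y : ℝ, y * f y = (Set.Ioi (Real.sqrt t)).indicator (fun y => Real.pi⁻¹ * (y * Real.exp (-y ^ 2))) y := by
    intro y
    by_cases h : y ∈ Set.Ioi (Real.sqrt t)
    · rw [hf, Set.indicator_of_mem h, Set.indicator_of_mem h]; ring
    · rw [hf, Set.indicator_of_notMem h, Set.indicator_of_notMem h]; ring
  have hsub : Set.Ioi (Real.sqrt t) ⊆ Set.Ioi 0 := Set.Ioi_subset_Ioi (Real.sqrt_nonneg t)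
  rw [← ofReal_integral_eq_lintegral_ofReal]
  · rw [integral_fun_norm_addHaar volume f, Complex.finrank_real_complex]
    have hv : (volume : Measure ℂ).real (Metric.ball 0 1) = Real.pi := by
      simp [Measure.real, Complex.volume_ball]
    rw [hv]
    simp only [smul_eq_mul, nsmul_eq_mul]
    have : (∫ y in Set.Ioi (0:ℝ), y ^ (2 - 1) * f y) = Real.pi⁻¹ * (Real.exp (-t) / 2) := by
      simp only [Nat.add_one_sub_one, pow_one, key]
      rw [setIntegral_indicator measurableSet_Ioi, Set.inter_eq_self_of_subset_right hsub,
        integral_const_mul, (tail_integral _).2, Real.sq_sqrt ht]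
    rw [this]
    congr 1
    have := Real.pi_pos
    push_cast
    field_simp
  · rw [integrable_fun_norm_addHaar (volume : Measure ℂ), Complex.finrank_real_complex]
    simp only [Nat.add_one_sub_one, pow_one, smul_eq_mul, key]
    rw [integrableOn_indicator_iff measurableSet_Ioi, Set.inter_eq_self_of_subset_left (by exact hsub)]
    exact (tail_integral _).1.const_mul _
  · filter_upwards with z
    simp only [hf]
    exact Set.indicator_nonneg (fun y _ => by positivity) _

instance gam_prob : IsProbabilityMeasure gam := by
  constructor
  have h0 : gam {z | (0:ℝ) < ‖z‖ ^ 2} = 1 := by rw [gam_tail 0 le_rfl]; simp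
  have hz : gam {z : ℂ | (0:ℝ) < ‖z‖ ^ 2}ᶜ = 0 := by
    have : {z : ℂ | (0:ℝ) < ‖z‖ ^ 2}ᶜ = {0} := by
      ext z; simp
    rw [this]
    exact withDensity_absolutelyContinuous _ _ (by simp)
  have hmeas : MeasurableSet {z : ℂ | (0:ℝ) < ‖z‖ ^ 2} :=
    measurableSet_lt measurable_const (by fun_prop)
  rw [← measure_add_measure_compl hmeas, h0, hz, add_zero]

noncomputable def gmu : Measure (Fin 8 → ℂ) := Measure.pi (fun _ => gam)

instance gmu_prob : IsProbabilityMeasure gmu := by unfold gmu; infer_instance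

lemma gden_integrable : Integrable gden := by
  refine ⟨gden_cont.aestronglyMeasurable, ?_⟩
  rw [hasFiniteIntegral_iff_ofReal (Filter.Eventually.of_forall gden_nonneg)]
  have := measure_univ (μ := gam)
  unfold gam at this
  rw [withDensity_apply _ MeasurableSet.univ, Measure.restrict_univ] at this
  rw [this]; exact ENNReal.one_lt_top

lemma gmu_eq : gmu = volume.withDensity (fun z : Fin 8 → ℂ => ENNReal.ofReal (∏ i, gden (z i))) := by
  unfold gmu
  apply Measure.pi_eq
  intro s hs
  have hs' : MeasurableSet (Set.univ.pi s) := MeasurableSet.univ_pi hs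
  rw [withDensity_apply _ hs', ← lintegral_indicator hs']
  have h1 : ∀ z : Fin 8 → ℂ, (Set.univ.pi s).indicator (fun z : Fin 8 → ℂ => ENNReal.ofReal (∏ i, gden (z i))) z
      = ENNReal.ofReal (∏ i, (s i).indicator gden (z i)) := by
    intro z
    by_cases h : z ∈ Set.univ.pi s
    · rw [Set.indicator_of_mem h]
      congr 1
      refine Finset.prod_congr rfl fun i _ => ?_
      rw [Set.indicator_of_mem (h i trivial)]
    · rw [Set.indicator_of_notMem h]
      simp only [Set.mem_pi, Set.mem_univ, true_imp_iff, not_forall] at h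
      obtain ⟨i, hi⟩ := h
      rw [Finset.prod_eq_zero (Finset.mem_univ i) (Set.indicator_of_notMem hi _)]
      simp
  simp_rw [h1]
  have hint : ∀ i, Integrable ((s i).indicator gden) := fun i => gden_integrable.indicator (hs i)
  have hnn : ∀ i z, 0 ≤ (s i).indicator gden z := fun i z => Set.indicator_nonneg (fun y _ => gden_nonneg y) _
  rw [← ofReal_integral_eq_lintegral_ofReal]
  · have := integral_fintype_prod_eq_prod (𝕜 := ℝ) (fun i => (s i).indicator gden) (μ := fun _ : Fin 8 => (volume : Measure ℂ))
    rw [← volume_pi] at this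
    rw [this, ENNReal.ofReal_prod_of_nonneg (fun i _ => integral_nonneg (hnn i))]
    refine Finset.prod_congr rfl fun i _ => ?_
    unfold gam
    rw [withDensity_apply _ (hs i), ofReal_integral_eq_lintegral_ofReal (hint i) (Filter.Eventually.of_forall (hnn i)),
      ← lintegral_indicator (hs i)]
    congr 1; ext z
    by_cases h : z ∈ s i <;> simp [h]
  · exact Integrable.fintype_prod (f := fun i => (s i).indicator gden) hint
  · exact Filter.Eventually.of_forall fun z => Finset.prod_nonneg fun i _ => hnn i _

lemma prod_gden (z : Fin 8 → ℂ) : ∏ i, gden (z i) = (Real.pi⁻¹)^8 * Real.exp (-∑ i, ‖z i‖^2) := by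
  unfold gden
  rw [Finset.prod_mul_distrib, ← Real.exp_sum]
  simp

lemma unitary_norm (U : Matrix (Fin 8) (Fin 8) ℂ) (hU : Uᴴ * U = 1) (z : Fin 8 → ℂ) :
    ∑ i, ‖(U *ᵥ z) i‖^2 = ∑ i, ‖z i‖^2 := by
  have h : ∀ w : Fin 8 → ℂ, ((∑ i, ‖w i‖^2 : ℝ) : ℂ) = star w ⬝ᵥ w := by
    intro w
    simp only [dotProduct, Pi.star_apply, Complex.ofReal_sum]
    refine Finset.sum_congr rfl fun i _ => ?_
    rw [Complex.star_def, Complex.conj_mul']; push_cast; rfl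
  have : ((∑ i, ‖(U *ᵥ z) i‖^2 : ℝ) : ℂ) = ((∑ i, ‖z i‖^2 : ℝ) : ℂ) := by
    rw [h, h, star_mulVec, dotProduct_mulVec, vecMul_vecMul, hU, vecMul_one]
  exact_mod_cast this

lemma gmu_map (U : Matrix (Fin 8) (Fin 8) ℂ) (hU : Uᴴ * U = 1) :
    MeasurePreserving (fun z => U *ᵥ z) gmu gmu := by
  have hc : Continuous (fun z : Fin 8 → ℂ => U *ᵥ z) := by fun_prop
  refine ⟨hc.measurable, ?_⟩
  have hdet : ‖U.det‖ = 1 := by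
    have := congrArg Matrix.det hU
    rw [det_mul, det_conjTranspose, det_one, Complex.star_def, Complex.conj_mul'] at this
    have h2 : ‖U.det‖^2 = 1 := by exact_mod_cast this
    nlinarith [norm_nonneg U.det]
  set f : (Fin 8 → ℂ) →ₗ[ℝ] (Fin 8 → ℂ) := (Matrix.toLin' U).restrictScalars ℝ with hf
  have hfd : LinearMap.det f = 1 := by
    rw [hf, LinearMap.det_restrictScalars, Algebra.norm_complex_apply, LinearMap.det_toLin',
      Complex.normSq_eq_norm_sq, hdet]; norm_num
  have hvol : (volume : Measure (Fin 8 → ℂ)).map (fun z => U *ᵥ z) = volume := by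
    have := Measure.map_linearMap_addHaar_eq_smul_addHaar (volume : Measure (Fin 8 → ℂ)) (f := f) (by rw [hfd]; norm_num)
    rw [hfd] at this
    have e : (⇑f) = (fun z => U *ᵥ z) := by ext z; simp [hf]
    rw [e] at this
    simpa using this
  have hd : Measurable (fun z : Fin 8 → ℂ => ENNReal.ofReal (∏ i, gden (z i))) := by
    have := gden_cont
    exact (by fun_prop : Continuous (fun z : Fin 8 → ℂ => (∏ i, gden (z i)))).measurable.ennreal_ofReal
  ext s hs
  rw [Measure.map_apply hc.measurable hs, gmu_eq, withDensity_apply _ hs, withDensity_apply _ (hc.measurable hs)]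
  conv_rhs => rw [← hvol]
  rw [setLIntegral_map hs hd hc.measurable]
  simp_rw [prod_gden, unitary_norm U hU]

end Gauss
section Resp
open MeasureTheory

open Classical in
noncomputable def rind (i : Fin 8) (z : Fin 8 → ℂ) : ℝ := if ∀ j, ‖z j‖ ≤ ‖z i‖ then 1 else 0

noncomputable def resp (i : Fin 8) (z : Fin 8 → ℂ) : ℝ := rind i z / ∑ j, rind j z

lemma rind_meas (i : Fin 8) : Measurable (rind i) := by
  unfold rind
  refine Measurable.ite ?_ measurable_const measurable_const
  have : {z : Fin 8 → ℂ | ∀ j, ‖z j‖ ≤ ‖z i‖} = ⋂ j, {z : Fin 8 → ℂ | ‖z j‖ ≤ ‖z i‖} := by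
    ext z; simp
  rw [this]
  exact MeasurableSet.iInter fun j => measurableSet_le (by fun_prop) (by fun_prop)

lemma rind_nonneg (i : Fin 8) (z : Fin 8 → ℂ) : 0 ≤ rind i z := by
  unfold rind; split_ifs <;> norm_num

lemma resp_meas (i : Fin 8) : Measurable (resp i) := by
  unfold resp
  exact (rind_meas i).div (Finset.measurable_fun_sum _ fun j _ => rind_meas j)

lemma exists_max (z : Fin 8 → ℂ) : ∃ i, ∀ j, ‖z j‖ ≤ ‖z i‖ := by
  obtain ⟨i, _, hi⟩ := Finset.exists_max_image Finset.univ (fun i => ‖z i‖) ⟨0, Finset.mem_univ _⟩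
  exact ⟨i, fun j => hi j (Finset.mem_univ _)⟩

lemma rsum_pos (z : Fin 8 → ℂ) : 0 < ∑ j, rind j z := by
  obtain ⟨i, hi⟩ := exists_max z
  refine Finset.sum_pos' (fun j _ => rind_nonneg j z) ⟨i, Finset.mem_univ _, ?_⟩
  unfold rind; rw [if_pos hi]; norm_num

lemma resp_nonneg (i : Fin 8) (z : Fin 8 → ℂ) : 0 ≤ resp i z :=
  div_nonneg (rind_nonneg i z) (rsum_pos z).le

lemma resp_sum (z : Fin 8 → ℂ) : ∑ i, resp i z = 1 := by
  unfold resp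
  rw [← Finset.sum_div, div_self (rsum_pos z).ne']

lemma resp_le_one (i : Fin 8) (z : Fin 8 → ℂ) : resp i z ≤ 1 := by
  rw [← resp_sum z]
  exact Finset.single_le_sum (fun j _ => resp_nonneg j z) (Finset.mem_univ i)

lemma resp_congr (i : Fin 8) (z w : Fin 8 → ℂ) (h : ∀ j, ‖z j‖ = ‖w j‖) : resp i z = resp i w := by
  unfold resp rind; simp only [h]

lemma resp_perm (i : Fin 8) (z : Fin 8 → ℂ) (σ : Equiv.Perm (Fin 8)) :
    resp i (fun j => z (σ j)) = resp (σ i) z := by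
  have h : ∀ i, rind i (fun j => z (σ j)) = rind (σ i) z := by
    intro i
    unfold rind
    have : (∀ j, ‖z (σ j)‖ ≤ ‖z (σ i)‖) ↔ (∀ j, ‖z j‖ ≤ ‖z (σ i)‖) :=
      ⟨fun H j => by simpa using H (σ.symm j), fun H j => H _⟩
    simp only [this]
  unfold resp
  simp only [h]
  rw [Equiv.sum_comp σ (fun j => rind j z)]

/-- the maximum -/
noncomputable def mx (z : Fin 8 → ℂ) : ℝ := ∑ i, resp i z * ‖z i‖ ^ 2

lemma mx_eq (z : Fin 8 → ℂ) (i : Fin 8) (hi : ∀ j, ‖z j‖ ≤ ‖z i‖) : mx z = ‖z i‖ ^ 2 := by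
  unfold mx
  have : ∀ j, resp j z * ‖z j‖ ^ 2 = resp j z * ‖z i‖ ^ 2 := by
    intro j
    by_cases h : ∀ k, ‖z k‖ ≤ ‖z j‖
    · rw [le_antisymm (hi j) (h i)]
    · have : resp j z = 0 := by unfold resp rind; rw [if_neg h]; simp
      rw [this]; simp
  simp_rw [this]
  rw [← Finset.sum_mul, resp_sum, one_mul]

lemma mx_set (t : ℝ) : {z | t < mx z} = (Set.univ.pi (fun _ : Fin 8 => {w : ℂ | t < ‖w‖ ^ 2}ᶜ))ᶜ := by
  ext z
  obtain ⟨i, hi⟩ := exists_max z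
  simp only [Set.mem_ofPred_eq, mx_eq z i hi, Set.mem_compl_iff, Set.mem_pi, Set.mem_univ, true_imp_iff,
    not_forall, not_not]
  refine ⟨fun h => ⟨i, h⟩, fun ⟨j, hj⟩ => hj.trans_le ?_⟩
  have := hi j
  gcongr

lemma mx_meas : Measurable mx := by
  unfold mx
  exact Finset.measurable_fun_sum _ fun j _ => (resp_meas j).mul (by fun_prop)

lemma sq_int (j : Fin 8) : Integrable (fun z : Fin 8 → ℂ => ‖z j‖ ^ 2) gmu ∧ ∫ z, ‖z j‖ ^ 2 ∂gmu = 1 := by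
  have hm : Measurable (fun z : Fin 8 → ℂ => ‖z j‖ ^ 2) := by fun_prop
  have hnn : 0 ≤ᵐ[gmu] (fun z : Fin 8 → ℂ => ‖z j‖ ^ 2) := Filter.Eventually.of_forall fun z => by positivity
  have key : ∫⁻ z, ENNReal.ofReal (‖z j‖ ^ 2) ∂gmu = 1 := by
    rw [lintegral_eq_lintegral_meas_lt gmu hnn hm.aemeasurable]
    have : ∀ t ∈ Set.Ioi (0:ℝ), gmu {z : Fin 8 → ℂ | t < ‖z j‖ ^ 2} = ENNReal.ofReal (Real.exp (-t)) := by
      intro t ht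
      rw [← gam_tail t (le_of_lt ht)]
      have h := (measurePreserving_eval (fun _ : Fin 8 => gam) j).measure_preimage
        (s := {w : ℂ | t < ‖w‖ ^ 2}) (measurableSet_lt measurable_const (by fun_prop)).nullMeasurableSet
      exact h
    rw [setLIntegral_congr_fun measurableSet_Ioi this, ← ofReal_integral_eq_lintegral_ofReal]
    · rw [integral_exp_neg_Ioi_zero]; simp
    · exact integrableOn_exp_neg_Ioi 0
    · exact Filter.Eventually.of_forall fun z => (Real.exp_pos _).le
  constructor
  · refine ⟨hm.aestronglyMeasurable, ?_⟩
    rw [hasFiniteIntegral_iff_ofReal hnn, key]; exact ENNReal.one_lt_top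
  · rw [integral_eq_lintegral_of_nonneg_ae hnn hm.aestronglyMeasurable, key]; simp

lemma mx_nonneg (z : Fin 8 → ℂ) : 0 ≤ mx z := Finset.sum_nonneg fun i _ => mul_nonneg (resp_nonneg i z) (by positivity)

lemma resp_sq_int (i j : Fin 8) : Integrable (fun z : Fin 8 → ℂ => resp i z * ‖z j‖ ^ 2) gmu := by
  refine (sq_int j).1.mono' ((resp_meas i).mul (by fun_prop)).aestronglyMeasurable ?_
  refine Filter.Eventually.of_forall fun z => ?_
  rw [Real.norm_of_nonneg (mul_nonneg (resp_nonneg i z) (by positivity))]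
  exact mul_le_of_le_one_left (by positivity) (resp_le_one i z)

lemma mx_int : Integrable mx gmu := integrable_finsetSum _ fun i _ => resp_sq_int i i

lemma mx_integral : ∫ z, mx z ∂gmu = 761 / 280 := by
  rw [mx_int.integral_eq_integral_meas_lt (Filter.Eventually.of_forall mx_nonneg)]
  have h : ∀ t ∈ Set.Ioi (0:ℝ), gmu.real {z | t < mx z} =
      8 * Real.exp (-1 * t) - 28 * Real.exp (-2 * t) + 56 * Real.exp (-3 * t) - 70 * Real.exp (-4 * t)
       + 56 * Real.exp (-5 * t) - 28 * Real.exp (-6 * t) + 8 * Real.exp (-7 * t) - Real.exp (-8 * t) := by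
    intro t ht
    have hms : MeasurableSet {w : ℂ | t < ‖w‖ ^ 2} := measurableSet_lt measurable_const (by fun_prop)
    rw [mx_set, probReal_compl_eq_one_sub (MeasurableSet.univ_pi fun _ => hms.compl)]
    have : gmu.real (Set.univ.pi (fun _ : Fin 8 => {w : ℂ | t < ‖w‖ ^ 2}ᶜ)) = (1 - Real.exp (-t)) ^ 8 := by
      unfold gmu
      rw [Measure.real, Measure.pi_pi]
      simp only [Finset.prod_const, Finset.card_univ, Fintype.card_fin, ENNReal.toReal_pow]
      congr 1
      rw [← Measure.real, probReal_compl_eq_one_sub hms, Measure.real, gam_tail t (le_of_lt ht),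
        ENNReal.toReal_ofReal (Real.exp_pos _).le]
    rw [this]
    have e : ∀ k : ℕ, Real.exp (-(k:ℝ) * t) = Real.exp (-t) ^ k := by
      intro k; rw [← Real.exp_nat_mul]; congr 1; ring
    have e1 := e 1; have e2 := e 2; have e3 := e 3; have e4 := e 4; have e5 := e 5
    have e6 := e 6; have e7 := e 7; have e8 := e 8
    push_cast at e1 e2 e3 e4 e5 e6 e7 e8
    rw [e1, e2, e3, e4, e5, e6, e7, e8]
    ring
  rw [setIntegral_congr_fun measurableSet_Ioi h]
  have hi : ∀ k : ℝ, 0 < k → IntegrableOn (fun t => Real.exp (-k * t)) (Set.Ioi 0) :=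
    fun k hk => integrableOn_exp_mul_Ioi (by linarith) 0
  have hv : ∀ k : ℝ, 0 < k → ∫ t in Set.Ioi (0:ℝ), Real.exp (-k * t) = 1 / k := by
    intro k hk
    rw [integral_exp_mul_Ioi (by linarith) 0]; simp
  have i1 := (hi 1 (by norm_num)).const_mul 8
  have i2 := (hi 2 (by norm_num)).const_mul 28
  have i3 := (hi 3 (by norm_num)).const_mul 56
  have i4 := (hi 4 (by norm_num)).const_mul 70
  have i5 := (hi 5 (by norm_num)).const_mul 56
  have i6 := (hi 6 (by norm_num)).const_mul 28
  have i7 := (hi 7 (by norm_num)).const_mul 8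
  have i8 := hi 8 (by norm_num)
  have is : ∀ {f g : ℝ → ℝ}, Integrable f (volume.restrict (Set.Ioi 0)) → Integrable g (volume.restrict (Set.Ioi 0)) →
    Integrable (fun x => f x - g x) (volume.restrict (Set.Ioi 0)) := fun hf hg => hf.sub hg
  have ia : ∀ {f g : ℝ → ℝ}, Integrable f (volume.restrict (Set.Ioi 0)) → Integrable g (volume.restrict (Set.Ioi 0)) →
    Integrable (fun x => f x + g x) (volume.restrict (Set.Ioi 0)) := fun hf hg => hf.add hg
  have j2 := is i1 i2
  have j3 := ia j2 i3
  have j4 := is j3 i4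
  have j5 := ia j4 i5
  have j6 := is j5 i6
  have j7 := ia j6 i7
  rw [integral_sub j7 i8, integral_add j6 i7, integral_sub j5 i6, integral_add j4 i5, integral_sub j3 i4,
    integral_add j2 i3, integral_sub i1 i2]
  simp only [integral_const_mul]
  rw [hv 1 (by norm_num), hv 2 (by norm_num), hv 3 (by norm_num), hv 4 (by norm_num), hv 5 (by norm_num),
    hv 6 (by norm_num), hv 7 (by norm_num), hv 8 (by norm_num)]
  norm_num

lemma ginv {G : Type*} [NormedAddCommGroup G] [NormedSpace ℝ G] (U : Matrix (Fin 8) (Fin 8) ℂ) (hU : Uᴴ * U = 1) (f : (Fin 8 → ℂ) → G)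
    (hf : AEStronglyMeasurable f gmu) : ∫ z, f (U *ᵥ z) ∂gmu = ∫ z, f z ∂gmu := by
  have h := gmu_map U hU
  conv_rhs => rw [← h.map_eq]
  rw [integral_map h.measurable.aemeasurable (by rw [h.map_eq]; exact hf)]

lemma gperm (σ : Equiv.Perm (Fin 8)) (f : (Fin 8 → ℂ) → ℝ)
    (hf : AEStronglyMeasurable f gmu) : ∫ z, f (fun j => z (σ j)) ∂gmu = ∫ z, f z ∂gmu := by
  have hU : (σ.permMatrix ℂ)ᴴ * σ.permMatrix ℂ = 1 := by
    rw [Matrix.conjTranspose_permMatrix, ← Matrix.permMatrix_mul]; simp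
  rw [← ginv _ hU f hf]
  congr 1; ext z; congr 1; ext j
  rw [Matrix.permMatrix_mulVec]; rfl

noncomputable def rsq (i j : Fin 8) : ℝ := ∫ z, resp i z * ‖z j‖ ^ 2 ∂gmu

lemma rsq_perm (σ : Equiv.Perm (Fin 8)) (i j : Fin 8) : rsq (σ i) (σ j) = rsq i j := by
  unfold rsq
  rw [← gperm σ (fun z => resp i z * ‖z j‖ ^ 2) (resp_sq_int i j).1]
  simp only [resp_perm]

lemma rsq_diag (i : Fin 8) : rsq i i = 761 / 2240 := by
  have h1 : ∑ i, rsq i i = 761 / 280 := by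
    rw [← mx_integral]; unfold mx rsq
    rw [integral_finsetSum _ fun i _ => resp_sq_int i i]
  have h2 : ∀ j, rsq j j = rsq i i := by
    intro j
    have := rsq_perm (Equiv.swap i j) i i
    simpa using this
  simp only [h2, Finset.sum_const, Finset.card_univ, Fintype.card_fin] at h1
  simp only [nsmul_eq_mul] at h1
  push_cast at h1
  linarith

lemma rsq_off (i j : Fin 8) (hij : i ≠ j) : rsq i j = (1 - 761 / 2240) / 7 := by
  have h1 : ∑ k, rsq k j = 1 := by
    unfold rsq
    rw [← integral_finsetSum _ fun i _ => resp_sq_int i j]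
    simp_rw [← Finset.sum_mul, resp_sum, one_mul]
    exact (sq_int j).2
  have h2 : ∀ k ∈ Finset.univ.erase j, rsq k j = rsq i j := by
    intro k hk
    have hk : k ≠ j := Finset.ne_of_mem_erase hk
    have := rsq_perm (Equiv.swap i k) i j
    rwa [Equiv.swap_apply_left, Equiv.swap_apply_of_ne_of_ne hij.symm hk.symm] at this
  rw [← Finset.add_sum_erase _ _ (Finset.mem_univ j), rsq_diag, Finset.sum_congr rfl h2] at h1
  simp at h1
  linarith

noncomputable def K (i j k : Fin 8) : ℂ := ∫ z, (resp i z : ℂ) * (z j * star (z k)) ∂gmu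

lemma mul_int (j k : Fin 8) (w : (Fin 8 → ℂ) → ℝ) (hw : Measurable w) (h0 : ∀ z, 0 ≤ w z) (h1 : ∀ z, w z ≤ 1) :
    Integrable (fun z : Fin 8 → ℂ => (w z : ℂ) * (z j * star (z k))) gmu := by
  refine ((sq_int j).1.add (sq_int k).1).mono' ?_ ?_
  · refine Measurable.aestronglyMeasurable ?_
    have : Measurable (fun z => (w z : ℂ)) := Complex.measurable_ofReal.comp hw
    have h2 : Measurable (fun z : Fin 8 → ℂ => (z j * star (z k))) := (by fun_prop : Continuous _).measurable
    exact this.mul h2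
  · refine Filter.Eventually.of_forall fun z => ?_
    simp only [norm_mul, norm_star, Complex.norm_real, Real.norm_of_nonneg (h0 z), Pi.add_apply]
    have a := norm_nonneg (z j); have b := norm_nonneg (z k)
    calc w z * (‖z j‖ * ‖z k‖) ≤ 1 * (‖z j‖ * ‖z k‖) := by gcongr; exact h1 z
      _ ≤ _ := by nlinarith [sq_nonneg (‖z j‖ - ‖z k‖)]

lemma K_eq (i j k : Fin 8) : K i j k = if j = k then (if i = j then (761 / 2240 : ℂ) else (1 - 761 / 2240) / 7) else 0 := by
  split_ifs with h1 h2
  · subst h1 h2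
    have : K i i i = ((rsq i i : ℝ) : ℂ) := by
      unfold K rsq
      rw [← integral_complex_ofReal]
      congr 1; ext z
      rw [Complex.star_def, Complex.mul_conj']; push_cast; rfl
    rw [this, rsq_diag]; norm_num
  · subst h1
    have : K i j j = ((rsq i j : ℝ) : ℂ) := by
      unfold K rsq
      rw [← integral_complex_ofReal]
      congr 1; ext z
      rw [Complex.star_def, Complex.mul_conj']; push_cast; rfl
    rw [this, rsq_off i j h2]; norm_num
  · have hU : (Matrix.diagonal (fun l : Fin 8 => if l = j then (-1 : ℂ) else 1))ᴴ *
        Matrix.diagonal (fun l : Fin 8 => if l = j then (-1 : ℂ) else 1) = 1 := by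
      rw [diagonal_conjTranspose, diagonal_mul_diagonal, ← diagonal_one]
      congr 1; ext l
      by_cases h : l = j <;> simp [h]
    have := ginv _ hU _ (mul_int j k _ (resp_meas i) (resp_nonneg i) (resp_le_one i)).1
    have e : ∀ z : Fin 8 → ℂ, resp i (Matrix.diagonal (fun l : Fin 8 => if l = j then (-1 : ℂ) else 1) *ᵥ z) = resp i z := by
      intro z
      apply resp_congr
      intro l
      rw [mulVec_diagonal]
      by_cases h : l = j <;> simp [h]
    simp only [e, mulVec_diagonal, if_true, if_neg (Ne.symm h1)] at this
    have h3 : K i j k = - K i j k := by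
      unfold K
      rw [← integral_neg]
      conv_lhs => rw [← this]
      congr 1; ext z; simp
    exact self_eq_neg.mp h3

end Resp
section LHS
open MeasureTheory

lemma effect_decomp (E : Matrix (Fin 8) (Fin 8) ℂ) (hE : IsEffect E) :
    ∃ (U : Matrix (Fin 8) (Fin 8) ℂ) (e : Fin 8 → ℝ), Uᴴ * U = 1 ∧ U * Uᴴ = 1 ∧
      (∀ i, 0 ≤ e i) ∧ (∀ i, e i ≤ 1) ∧ E = U * diagonal (fun i => (e i : ℂ)) * Uᴴ := by
  obtain ⟨h1, h2⟩ := hE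
  have hH := h1.isHermitian
  have u1 : (hH.eigenvectorUnitary : Matrix (Fin 8) (Fin 8) ℂ)ᴴ * (hH.eigenvectorUnitary : Matrix (Fin 8) (Fin 8) ℂ) = 1 :=
    Unitary.coe_star_mul_self hH.eigenvectorUnitary
  have u2 : (hH.eigenvectorUnitary : Matrix (Fin 8) (Fin 8) ℂ) * (hH.eigenvectorUnitary : Matrix (Fin 8) (Fin 8) ℂ)ᴴ = 1 :=
    Unitary.coe_mul_star_self hH.eigenvectorUnitary
  have hs : E = (hH.eigenvectorUnitary : Matrix (Fin 8) (Fin 8) ℂ) * diagonal (fun i => (hH.eigenvalues i : ℂ)) *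
      (hH.eigenvectorUnitary : Matrix (Fin 8) (Fin 8) ℂ)ᴴ := by
    conv_lhs => rw [hH.spectral_theorem]
    rw [Unitary.conjStarAlgAut_apply]; rfl
  refine ⟨_, _, u1, u2, fun i => h1.eigenvalues_nonneg i, fun i => ?_, hs⟩
  have h3 := h2.conjTranspose_mul_mul_same (hH.eigenvectorUnitary : Matrix (Fin 8) (Fin 8) ℂ)
  have h4 : (hH.eigenvectorUnitary : Matrix (Fin 8) (Fin 8) ℂ)ᴴ * (1 - E) * (hH.eigenvectorUnitary : Matrix (Fin 8) (Fin 8) ℂ)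
      = 1 - diagonal (fun i => (hH.eigenvalues i : ℂ)) := by
    generalize hVdef : (hH.eigenvectorUnitary : Matrix (Fin 8) (Fin 8) ℂ) = V at *
    generalize diagonal (fun i => (hH.eigenvalues i : ℂ)) = D at *
    rw [mul_sub, sub_mul, mul_one, u1]
    congr 1
    calc Vᴴ * E * V = Vᴴ * (V * D * Vᴴ) * V := by rw [← hs]
      _ = (Vᴴ * V) * D * (Vᴴ * V) := by simp only [Matrix.mul_assoc]
      _ = D := by rw [u1]; simp
  rw [h4] at h3
  have h5 := h3.diag_nonneg (i := i)
  simp only [Matrix.sub_apply, one_apply_eq, diagonal_apply_eq] at h5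
  have h6 : (0:ℂ) ≤ ((1 - hH.eigenvalues i : ℝ) : ℂ) := by push_cast; exact h5
  have := Complex.zero_le_real.mp h6
  linarith

variable {X : Type} [Fintype X] [DecidableEq X]

noncomputable def wgt (U : X → Matrix (Fin 8) (Fin 8) ℂ) (r : X → Fin 8) (z : Fin 8 → ℂ) : ℝ :=
  ∏ x, resp (r x) ((U x)ᴴ *ᵥ z)

lemma wgt_meas (U : X → Matrix (Fin 8) (Fin 8) ℂ) (r : X → Fin 8) : Measurable (wgt U r) := by
  unfold wgt
  refine Finset.measurable_fun_prod _ fun x _ => (resp_meas _).comp ?_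
  exact (by fun_prop : Continuous fun z : Fin 8 → ℂ => (U x)ᴴ *ᵥ z).measurable

lemma wgt_nonneg (U : X → Matrix (Fin 8) (Fin 8) ℂ) (r : X → Fin 8) (z : Fin 8 → ℂ) : 0 ≤ wgt U r z :=
  Finset.prod_nonneg fun _ _ => resp_nonneg _ _

lemma wgt_le_one (U : X → Matrix (Fin 8) (Fin 8) ℂ) (r : X → Fin 8) (z : Fin 8 → ℂ) : wgt U r z ≤ 1 :=
  Finset.prod_le_one (fun _ _ => resp_nonneg _ _) (fun _ _ => resp_le_one _ _)

lemma wgt_sum (U : X → Matrix (Fin 8) (Fin 8) ℂ) (z : Fin 8 → ℂ) : 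
    ∑ r : X → Fin 8, wgt U r z = 1 := by
  unfold wgt
  have := (Finset.prod_univ_sum (fun _ : X => (Finset.univ : Finset (Fin 8))) (fun x i => resp i ((U x)ᴴ *ᵥ z))).symm
  rw [Fintype.piFinset_univ] at this
  rw [this]
  simp [resp_sum]

lemma wgt_sum_c (U : X → Matrix (Fin 8) (Fin 8) ℂ) (z : Fin 8 → ℂ) (x : X) (c : Fin 8 → ℝ) : 
    ∑ r : X → Fin 8, c (r x) * wgt U r z = ∑ i, c i * resp i ((U x)ᴴ *ᵥ z) := by
  unfold wgt
  have := (Finset.prod_univ_sum (fun _ : X => (Finset.univ : Finset (Fin 8)))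
    (fun y i => (if y = x then c i else 1) * resp i ((U y)ᴴ *ᵥ z))).symm
  rw [Fintype.piFinset_univ] at this
  simp only [Finset.prod_mul_distrib, Finset.prod_ite_eq', Finset.mem_univ, if_true] at this
  rw [this, ← Finset.mul_prod_erase _ _ (Finset.mem_univ x), Finset.prod_eq_one]
  · simp
  · intro y hy
    simp [Finset.ne_of_mem_erase hy, resp_sum]

noncomputable def LL (U : X → Matrix (Fin 8) (Fin 8) ℂ) (r : X → Fin 8) (j k : Fin 8) : ℂ :=
  ∫ z, (wgt U r z : ℂ) * (z j * star (z k)) ∂gmu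

noncomputable def SS (U : X → Matrix (Fin 8) (Fin 8) ℂ) (r : X → Fin 8) (F : Matrix (Fin 8) (Fin 8) ℂ) : ℂ :=
  (∑ j, ∑ k, F j k * LL U r j k) / 8

lemma SS_sub (U : X → Matrix (Fin 8) (Fin 8) ℂ) (r : X → Fin 8) (F G : Matrix (Fin 8) (Fin 8) ℂ) :
    SS U r (F - G) = SS U r F - SS U r G := by
  unfold SS
  simp only [Matrix.sub_apply, sub_mul, Finset.sum_sub_distrib, sub_div]

lemma SS_nonneg (U : X → Matrix (Fin 8) (Fin 8) ℂ) (r : X → Fin 8) (F : Matrix (Fin 8) (Fin 8) ℂ) (hF : F.PosSemidef) :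
    0 ≤ SS U r F := by
  unfold SS LL
  have h1 : ∀ j k, Integrable (fun z : Fin 8 → ℂ => F j k * ((wgt U r z : ℂ) * (z j * star (z k)))) gmu :=
    fun j k => (mul_int j k _ (wgt_meas U r) (wgt_nonneg U r) (wgt_le_one U r)).const_mul _
  simp_rw [← integral_const_mul]
  simp_rw [← fun j => integral_finsetSum Finset.univ fun k _ => h1 j k]
  rw [← integral_finsetSum Finset.univ fun j _ => integrable_finsetSum Finset.univ fun k _ => h1 j k]
  have h2 : ∀ z : Fin 8 → ℂ, ∃ s : ℝ, 0 ≤ s ∧ ∑ j, ∑ k, F j k * ((wgt U r z : ℂ) * (z j * star (z k))) = (s : ℂ) := by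
    intro z
    have h := hF.dotProduct_mulVec_nonneg (star z)
    have e : ∑ j, ∑ k, F j k * ((wgt U r z : ℂ) * (z j * star (z k))) = (wgt U r z : ℂ) * (star (star z) ⬝ᵥ F *ᵥ star z) := by
      simp only [star_star, dotProduct, mulVec, Finset.mul_sum, Pi.star_apply]
      refine Finset.sum_congr rfl fun j _ => Finset.sum_congr rfl fun k _ => ?_
      ring
    rw [e]
    obtain ⟨s, hs, hs'⟩ := RCLike.nonneg_iff_exists_ofReal.mp h
    refine ⟨wgt U r z * s, mul_nonneg (wgt_nonneg _ _ _) hs, ?_⟩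
    rw [← hs']; push_cast; rfl
  choose s hs hs' using h2
  simp_rw [hs']
  rw [integral_complex_ofReal]
  have : 0 ≤ (∫ z, s z ∂gmu) / 8 := div_nonneg (integral_nonneg hs) (by norm_num)
  exact_mod_cast Complex.zero_le_real.mpr this

lemma resp_conj (U : Matrix (Fin 8) (Fin 8) ℂ) (hU : Uᴴ * U = 1) (hU' : U * Uᴴ = 1) (i j k : Fin 8) :
    ∫ z, (resp i (Uᴴ *ᵥ z) : ℂ) * (z j * star (z k)) ∂gmu =
      (1 - 761 / 2240) / 7 * (if j = k then 1 else 0) + 481/1960 * (U j i * star (U k i)) := by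
  have hm : AEStronglyMeasurable (fun z : Fin 8 → ℂ => (resp i (Uᴴ *ᵥ z) : ℂ) * (z j * star (z k))) gmu :=
    (mul_int j k (fun z => resp i (Uᴴ *ᵥ z)) ((resp_meas i).comp 
      (by fun_prop : Continuous fun z : Fin 8 → ℂ => Uᴴ *ᵥ z).measurable)
      (fun _ => resp_nonneg _ _) (fun _ => resp_le_one _ _)).1
  rw [← ginv U hU _ hm]
  simp only [mulVec_mulVec, hU, one_mulVec]
  have e : ∀ z : Fin 8 → ℂ, (resp i z : ℂ) * ((U *ᵥ z) j * star ((U *ᵥ z) k)) =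
      ∑ a, ∑ b, (U j a * star (U k b)) * ((resp i z : ℂ) * (z a * star (z b))) := by
    intro z
    simp only [mulVec, dotProduct, star_sum, star_mul']
    rw [Finset.sum_mul_sum]
    simp only [Finset.mul_sum]
    refine Finset.sum_congr rfl fun a _ => Finset.sum_congr rfl fun b _ => ?_
    ring
  simp_rw [e]
  have h1 : ∀ a b, Integrable (fun z : Fin 8 → ℂ => (U j a * star (U k b)) * ((resp i z : ℂ) * (z a * star (z b)))) gmu :=
    fun a b => (mul_int a b _ (resp_meas i) (resp_nonneg i) (resp_le_one i)).const_mul _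
  rw [integral_finsetSum Finset.univ fun j _ => integrable_finsetSum Finset.univ fun k _ => h1 j k]
  simp_rw [fun j => integral_finsetSum Finset.univ fun k _ => h1 j k, integral_const_mul]
  change ∑ a, ∑ b, (U j a * star (U k b)) * K i a b = _
  simp only [K_eq, mul_ite, mul_zero, Finset.sum_ite_eq, Finset.mem_univ, if_true]
  have h2 : ∀ a, (if i = a then U j a * star (U k a) * (761 / 2240) else U j a * star (U k a) * ((1 - 761 / 2240) / 7)) =
      (1 - 761 / 2240) / 7 * (U j a * star (U k a)) + if i = a then 481/1960 * (U j a * star (U k a)) else 0 := by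
    intro a; split_ifs <;> ring
  simp_rw [h2, Finset.sum_add_distrib, ← Finset.mul_sum]
  have h3 : ∑ a, U j a * star (U k a) = if j = k then 1 else 0 := by
    have := congrFun (congrFun hU' j) k
    rw [mul_apply, one_apply] at this
    exact this
  rw [h3]; simp

lemma LL_int (U : X → Matrix (Fin 8) (Fin 8) ℂ) (r : X → Fin 8) (j k : Fin 8) :
    Integrable (fun z : Fin 8 → ℂ => (wgt U r z : ℂ) * (z j * star (z k))) gmu :=
  mul_int j k _ (wgt_meas U r) (wgt_nonneg U r) (wgt_le_one U r)

lemma LL_sum (U : X → Matrix (Fin 8) (Fin 8) ℂ) (j k : Fin 8) : ∑ r, LL U r j k = if j = k then 1 else 0 := by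
  unfold LL
  rw [← integral_finsetSum _ fun r _ => LL_int U r j k]
  simp_rw [← Finset.sum_mul, ← Complex.ofReal_sum, wgt_sum]
  have h : ∀ z : Fin 8 → ℂ, ((1 : ℝ) : ℂ) * (z j * star (z k)) = ∑ i, (resp i z : ℂ) * (z j * star (z k)) := by
    intro z; rw [← Finset.sum_mul, ← Complex.ofReal_sum, resp_sum]
  simp_rw [h]
  rw [integral_finsetSum _ fun i _ => mul_int j k _ (resp_meas i) (resp_nonneg i) (resp_le_one i)]
  change ∑ i, K i j k = _
  simp only [K_eq]
  split_ifs with hjk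
  · rw [← Finset.add_sum_erase _ _ (Finset.mem_univ j), if_pos rfl]
    rw [Finset.sum_congr rfl (g := fun _ => ((1 - 761 / 2240) / 7 : ℂ)) (fun i hi => if_neg (Finset.ne_of_mem_erase hi))]
    simp; norm_num
  · simp

lemma LL_sum_c (U : X → Matrix (Fin 8) (Fin 8) ℂ) (hU : ∀ x, (U x)ᴴ * U x = 1) (hU' : ∀ x, U x * (U x)ᴴ = 1)
    (x : X) (c : Fin 8 → ℝ) (j k : Fin 8) :
    ∑ r, (c (r x) : ℂ) * LL U r j k =
      (1 - 761 / 2240) / 7 * (∑ i, (c i : ℂ)) * (if j = k then 1 else 0) +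
        481/1960 * (U x * diagonal (fun i => (c i : ℂ)) * (U x)ᴴ) j k := by
  unfold LL
  simp_rw [← integral_const_mul]
  rw [← integral_finsetSum _ fun r _ => (LL_int U r j k).const_mul _]
  simp_rw [← mul_assoc, ← Complex.ofReal_mul]
  have h : ∀ z : Fin 8 → ℂ, ∑ r : X → Fin 8, ((c (r x) * wgt U r z : ℝ) : ℂ) * z j * star (z k) =
      ∑ i, (c i : ℂ) * ((resp i ((U x)ᴴ *ᵥ z) : ℂ) * (z j * star (z k))) := by
    intro z
    simp_rw [mul_assoc]
    rw [← Finset.sum_mul, ← Complex.ofReal_sum, wgt_sum_c, Complex.ofReal_sum, Finset.sum_mul]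
    push_cast
    simp only [mul_assoc]
  simp_rw [h]
  have hi : ∀ i, Integrable (fun z : Fin 8 → ℂ => (resp i ((U x)ᴴ *ᵥ z) : ℂ) * (z j * star (z k))) gmu := fun i =>
    (mul_int j k (fun z => resp i ((U x)ᴴ *ᵥ z)) ((resp_meas i).comp 
      (by fun_prop : Continuous fun z : Fin 8 → ℂ => (U x)ᴴ *ᵥ z).measurable)
      (fun _ => resp_nonneg _ _) (fun _ => resp_le_one _ _))
  rw [integral_finsetSum _ fun i _ => (hi i).const_mul _]
  simp_rw [integral_const_mul, resp_conj (U x) (hU x) (hU' x)]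
  rw [mul_apply]
  simp only [mul_diagonal, conjTranspose_apply, mul_add, Finset.sum_add_distrib, Finset.mul_sum, Finset.sum_mul]
  congr 1 <;> refine Finset.sum_congr rfl fun i _ => by ring

lemma SS_sum (U : X → Matrix (Fin 8) (Fin 8) ℂ) (F : Matrix (Fin 8) (Fin 8) ℂ) :
    ∑ r, SS U r F = F.trace / 8 := by
  unfold SS
  rw [← Finset.sum_div, Finset.sum_comm]
  simp_rw [fun j => Finset.sum_comm (s := (Finset.univ : Finset (X → Fin 8))) (t := (Finset.univ : Finset (Fin 8))) 
     (f := fun r k => F j k * LL U r j k), ← Finset.mul_sum, LL_sum]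
  simp [trace]

lemma SS_sum_c (U : X → Matrix (Fin 8) (Fin 8) ℂ) (hU : ∀ x, (U x)ᴴ * U x = 1) (hU' : ∀ x, U x * (U x)ᴴ = 1)
    (x : X) (c : Fin 8 → ℝ) (F : Matrix (Fin 8) (Fin 8) ℂ) :
    ∑ r, (c (r x) : ℂ) * SS U r F = ((1 - 761 / 2240) / 7 * (∑ i, (c i : ℂ)) * F.trace + 
      481/1960 * ∑ j, ∑ k, (U x * diagonal (fun i => (c i : ℂ)) * (U x)ᴴ) j k * F j k) / 8 := by
  unfold SS
  simp_rw [mul_div_assoc', ← Finset.sum_div, Finset.mul_sum]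
  rw [Finset.sum_comm]
  simp_rw [fun j => Finset.sum_comm (s := (Finset.univ : Finset (X → Fin 8))) (t := (Finset.univ : Finset (Fin 8))) 
     (f := fun r k => (c (r x) : ℂ) * (F j k * LL U r j k))]
  have : ∀ j k, ∑ r : X → Fin 8, (c (r x) : ℂ) * (F j k * LL U r j k) = F j k * ∑ r : X → Fin 8, (c (r x) : ℂ) * LL U r j k := by
    intro j k; rw [Finset.mul_sum]; refine Finset.sum_congr rfl fun r _ => by ring
  simp_rw [this, LL_sum_c U hU hU']
  congr 1
  simp only [mul_add, Finset.sum_add_distrib, mul_ite, mul_one, mul_zero, Finset.sum_ite_eq, Finset.mem_univ, if_true]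
  congr 1
  · simp only [trace, diag_apply, ← Finset.mul_sum, Finset.sum_mul]
    rw [← Finset.sum_mul]; ring
  · refine Finset.sum_congr rfl fun j _ => Finset.sum_congr rfl fun k _ => by ring

end LHS
section Final3

lemma trace_vec (M : Matrix (Fin 8 × Fin 8) (Fin 8 × Fin 8) ℂ) (φ : Fin 8 × Fin 8 → ℂ) :
    trace (M * vecMulVec φ (star φ)) = star φ ⬝ᵥ (M *ᵥ φ) := by
  rw [mul_vecMulVec, trace_vecMulVec, dotProduct_comm]

lemma maxEnt_exp (A B : Matrix (Fin 8) (Fin 8) ℂ) :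
    star (maxEnt 8) ⬝ᵥ ((A ⊗ₖ B) *ᵥ maxEnt 8) = (∑ j, ∑ k, A j k * B j k) / 8 := by
  have h8 : ((1 / Real.sqrt (8:ℕ) : ℝ) : ℂ) * ((1 / Real.sqrt (8:ℕ) : ℝ) : ℂ) = 1 / 8 := by
    rw [← Complex.ofReal_mul, div_mul_div_comm, Real.mul_self_sqrt (by positivity)]; push_cast; norm_num
  unfold maxEnt
  simp only [dotProduct, mulVec, Fintype.sum_prod_type, Pi.star_apply, kroneckerMap_apply, mul_ite, mul_zero,
    apply_ite star, star_zero, ite_mul, zero_mul, Finset.sum_ite_eq, Finset.mem_univ, if_true,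
    Complex.star_def, Complex.conj_ofReal]
  simp only [Finset.mul_sum, Finset.sum_div]
  refine Finset.sum_congr rfl fun j _ => Finset.sum_congr rfl fun k _ => ?_
  linear_combination A j k * B j k * h8

lemma trace_iso (A B : Matrix (Fin 8) (Fin 8) ℂ) :
    trace ((A ⊗ₖ B) * isoState 8 0.24) = 0.24 / 8 * (∑ j, ∑ k, A j k * B j k) + 0.76 / 64 * (A.trace * B.trace) := by
  unfold isoState projME
  rw [mul_add, trace_add, Matrix.mul_smul, Matrix.mul_smul, trace_smul, trace_smul, trace_vec, maxEnt_exp, mul_one,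
    trace_kronecker, smul_eq_mul, smul_eq_mul]
  push_cast
  ring

lemma lhv (X Y : Type) [Fintype X] [Fintype Y]
      (E : X → Matrix (Fin 8) (Fin 8) ℂ) (F : Y → Matrix (Fin 8) (Fin 8) ℂ)
      (hE : ∀ x, IsEffect (E x)) (hF : ∀ y, IsEffect (F y)) :
      ∃ (nΛ : ℕ) (q : Fin nΛ → ℝ) (P : Fin 2 → X → Fin nΛ → ℝ)
        (Q : Fin 2 → Y → Fin nΛ → ℝ),
        (∀ μ, 0 ≤ q μ) ∧ (∑ μ, q μ = 1) ∧
        (∀ a x μ, 0 ≤ P a x μ) ∧ (∀ x μ, ∑ a, P a x μ = 1) ∧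
        (∀ b y μ, 0 ≤ Q b y μ) ∧ (∀ y μ, ∑ b, Q b y μ = 1) ∧
        (∀ (a b : Fin 2) x y,
          Matrix.trace
            (((if a = 0 then E x else 1 - E x) ⊗ₖ (if b = 0 then F y else 1 - F y)) *
              isoState 8 0.24) =
            ((∑ μ, q μ * P a x μ * Q b y μ : ℝ) : ℂ)) := by
  classical
  choose U e hU hU' he0 he1 hEe using fun x => effect_decomp (E x) (hE x)
  set c : Fin 2 → X → Fin 8 → ℝ := fun a x i => if a = 0 then e x i else 1 - e x i with hc
  have hc0 : ∀ a x i, 0 ≤ c a x i := by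
    intro a x i; simp only [hc]; split_ifs
    · exact he0 x i
    · linarith [he1 x i]
  have hcE : ∀ a x, (if a = 0 then E x else 1 - E x) = U x * diagonal (fun i => (c a x i : ℂ)) * (U x)ᴴ := by
    intro a x
    simp only [hc]
    split_ifs
    · exact hEe x
    · have : diagonal (fun i => ((1 - e x i : ℝ) : ℂ)) = 1 - diagonal (fun i => (e x i : ℂ)) := by
        rw [← diagonal_one, diagonal_sub]; push_cast; rfl
      rw [this, mul_sub, sub_mul, mul_one, hU' x, ← hEe x]
  have hct : ∀ a x, (if a = 0 then E x else 1 - E x).trace = ∑ i, (c a x i : ℂ) := by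
    intro a x
    rw [hcE, trace_mul_comm, ← mul_assoc, hU x, one_mul, trace_diagonal]
  have hcs : ∀ x i, ∑ a, c a x i = 1 := by intro x i; simp [hc]
  have hFb : ∀ (b : Fin 2) y, (if b = 0 then F y else 1 - F y).PosSemidef := by
    intro b y; split_ifs
    · exact (hF y).1
    · exact (hF y).2
  -- real versions
  set R : (X → Fin 8) → Matrix (Fin 8) (Fin 8) ℂ → ℝ := fun r M => (SS U r M).re with hR
  have hRS : ∀ r M, M.PosSemidef → ((R r M : ℝ) : ℂ) = SS U r M := by
    intro r M hM
    have := SS_nonneg U r M hM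
    obtain ⟨s, _, hs⟩ := RCLike.nonneg_iff_exists_ofReal.mp this
    simp only [hR]
    rw [← hs]; simp
  have hR0 : ∀ r M, M.PosSemidef → 0 ≤ R r M := by
    intro r M hM
    have := SS_nonneg U r M hM
    rw [← hRS r M hM] at this
    exact Complex.zero_le_real.mp this
  have hRsub : ∀ r M N, R r (M - N) = R r M - R r N := by
    intro r M N; simp only [hR, SS_sub, Complex.sub_re]
  set Q' : Fin 2 → Y → (X → Fin 8) → ℝ := fun b y r =>
    if R r 1 = 0 then (if b = 0 then 1 else 0) else R r (if b = 0 then F y else 1 - F y) / R r 1 with hQ'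
  have hqQ : ∀ b y r, R r 1 * Q' b y r = R r (if b = 0 then F y else 1 - F y) := by
    intro b y r
    simp only [hQ']
    by_cases h : R r 1 = 0
    · have h1 := hR0 r _ (hF y).1
      have h2 := hR0 r _ (hF y).2
      have h3 := hRsub r 1 (F y)
      rw [if_pos h, h, zero_mul]
      split_ifs <;> linarith
    · rw [if_neg h, mul_div_cancel₀ _ h]
  set t : ℝ := 0.24 * 1960 / 481 with ht
  set P' : Fin 2 → X → (X → Fin 8) → ℝ := fun a x r => t * c a x (r x) + (1 - t) * ((∑ i, c a x i) / 8) with hP'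
  have ht0 : 0 ≤ t := by rw [ht]; norm_num
  have ht1 : 0 ≤ 1 - t := by rw [ht]; norm_num
  have key : ∀ (a b : Fin 2) x y,
          Matrix.trace
            (((if a = 0 then E x else 1 - E x) ⊗ₖ (if b = 0 then F y else 1 - F y)) *
              isoState 8 0.24) =
            ((∑ r, R r 1 * P' a x r * Q' b y r : ℝ) : ℂ) := by
    intro a b x y
    have e1 : ∀ r, R r 1 * P' a x r * Q' b y r = P' a x r * R r (if b = 0 then F y else 1 - F y) := by
      intro r; rw [← hqQ]; ring
    simp_rw [e1]
    rw [trace_iso, hct, Complex.ofReal_sum]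
    simp_rw [Complex.ofReal_mul, hRS _ _ (hFb b y)]
    generalize (if b = 0 then F y else 1 - F y) = G
    simp only [hP']
    push_cast
    simp_rw [add_mul, Finset.sum_add_distrib, mul_assoc, ← Finset.mul_sum]
    rw [SS_sum, SS_sum_c U hU hU' x (c a x), ← hcE a x, ht]
    push_cast
    ring
  have hq1 : ∑ r, R r 1 = 1 := by
    have : ((∑ r, R r 1 : ℝ) : ℂ) = 1 := by
      rw [Complex.ofReal_sum]
      simp_rw [hRS _ _ Matrix.PosSemidef.one]
      rw [SS_sum]; simp
    exact_mod_cast this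
  let eqv := Fintype.equivFin (X → Fin 8)
  refine ⟨Fintype.card (X → Fin 8), fun μ => R (eqv.symm μ) 1, fun a x μ => P' a x (eqv.symm μ), fun b y μ => Q' b y (eqv.symm μ),
    fun μ => hR0 _ _ Matrix.PosSemidef.one, ?_, ?_, ?_, ?_, ?_, ?_⟩
  · rw [← hq1]; exact Equiv.sum_comp eqv.symm (fun r => R r 1)
  · intro a x μ
    have := hc0 a x
    simp only [hP']
    have h2 : 0 ≤ ∑ i, c a x i := Finset.sum_nonneg fun i _ => this i
    have h3 := this (eqv.symm μ x)
    positivity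
  · intro x μ
    simp only [hP', Finset.sum_add_distrib, ← Finset.mul_sum, hcs, ← Finset.sum_div]
    rw [Finset.sum_comm]
    simp only [hcs]
    simp
  · intro b y μ
    simp only [hQ']
    split_ifs
    · norm_num
    · norm_num
    · exact div_nonneg (hR0 _ _ (hF y).1) (hR0 _ _ Matrix.PosSemidef.one)
    · exact div_nonneg (hR0 _ _ (hF y).2) (hR0 _ _ Matrix.PosSemidef.one)
  · intro y μ
    simp only [hQ', Fin.sum_univ_two]
    by_cases h : R (eqv.symm μ) 1 = 0
    · simp [h]
    · simp only [if_neg h, if_true, if_neg (by decide : ¬ (1:Fin 2) = 0)]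
      rw [hRsub, ← add_div, add_sub_cancel, div_self h]
  · intro a b x y
    rw [key]
    congr 1
    exact (Equiv.sum_comp eqv.symm (fun r => R r 1 * P' a x r * Q' b y r)).symm

end Final3

section Part2

lemma phi2_exp (A B : Matrix (Fin 8) (Fin 8) ℂ) :
    star phi2 ⬝ᵥ ((A ⊗ₖ B) *ᵥ phi2) =
      (A 0 0 * B 0 0 + A 0 1 * B 0 1 + A 1 0 * B 1 0 + A 1 1 * B 1 1) / 2 := by
  have h2 : ((1 / Real.sqrt 2 : ℝ) : ℂ) * ((1 / Real.sqrt 2 : ℝ) : ℂ) = 1 / 2 := by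
    rw [← Complex.ofReal_mul, div_mul_div_comm, Real.mul_self_sqrt (by positivity)]; push_cast; norm_num
  have hs : ∀ f : Fin 8 × Fin 8 → ℂ, ∑ q, f q * phi2 q =
      (f (0,0) + f (1,1)) * ((1 / Real.sqrt 2 : ℝ) : ℂ) := by
    intro f
    have : ∀ q, f q * phi2 q = (if q = (0,0) then f (0,0) * ((1 / Real.sqrt 2 : ℝ) : ℂ) else 0) +
        (if q = (1,1) then f (1,1) * ((1 / Real.sqrt 2 : ℝ) : ℂ) else 0) := by
      intro q
      unfold phi2
      by_cases h0 : q = (0,0)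
      · subst h0; simp
      · by_cases h1 : q = (1,1)
        · subst h1; simp
        · simp [h0, h1]
    simp_rw [this, Finset.sum_add_distrib, Finset.sum_ite_eq']
    simp; ring
  have hst : star phi2 = phi2 := by
    funext q; unfold phi2; simp only [Pi.star_apply]; split_ifs <;> simp
  rw [hst, dotProduct_comm, dotProduct, hs]
  simp only [mulVec, dotProduct, hs, kroneckerMap_apply]
  linear_combination (A 0 0 * B 0 0 + A 0 1 * B 0 1 + A 1 0 * B 1 0 + A 1 1 * B 1 1) * h2

lemma trace_rho (l : ℝ) (M : Matrix (Fin 8 × Fin 8) (Fin 8 × Fin 8) ℂ) :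
    trace (M * rhoTilde l) = (l : ℂ) * trace (M * isoState 8 0.24) +
      ((1 - l : ℝ) : ℂ) * (star phi2 ⬝ᵥ (M *ᵥ phi2)) := by
  unfold rhoTilde
  rw [mul_add, trace_add, Matrix.mul_smul, Matrix.mul_smul, trace_smul, trace_smul, trace_vec, smul_eq_mul, smul_eq_mul]

/-- real observable `[[a,b],[b,-a]] ⊕ 1` -/
noncomputable def obs (a b : ℝ) : Matrix (Fin 8) (Fin 8) ℂ :=
  !![(a:ℂ), b, 0,0,0,0,0,0; b, -a, 0,0,0,0,0,0; 0,0,1,0,0,0,0,0; 0,0,0,1,0,0,0,0; 0,0,0,0,1,0,0,0;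
     0,0,0,0,0,1,0,0; 0,0,0,0,0,0,1,0; 0,0,0,0,0,0,0,1]

lemma obs_herm (a b : ℝ) : (obs a b)ᴴ = obs a b := by
  ext i j
  fin_cases i <;> fin_cases j <;> simp [obs, conjTranspose_apply]

lemma obs_sq (a b : ℝ) (h : a * a + b * b = 1) : obs a b * obs a b = 1 := by
  have hc : (a:ℂ) * a + b * b = 1 := by exact_mod_cast h
  have hd : (b:ℂ) * b + a * a = 1 := by rw [add_comm]; exact hc
  ext i j
  rw [mul_apply, Fin.sum_univ_eight]
  fin_cases i <;> fin_cases j <;> simp [obs, hc, hd, mul_comm]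

lemma obs_dich (a b : ℝ) (h : a * a + b * b = 1) : IsDichotomicObservable (obs a b) := by
  have hh := obs_herm a b
  have hs := obs_sq a b h
  refine ⟨hh, ?_, ?_⟩
  · have : 1 - obs a b = (1 / 2 : ℝ) • ((1 - obs a b)ᴴ * (1 - obs a b)) := by
      rw [conjTranspose_sub, hh, conjTranspose_one, mul_sub, sub_mul, sub_mul, hs]
      ext i j
      simp only [Matrix.sub_apply, Matrix.smul_apply, mul_one, one_mul, Complex.real_smul]; push_cast; ring
    rw [this]
    exact (posSemidef_conjTranspose_mul_self _).smul (by norm_num)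
  · have : 1 + obs a b = (1 / 2 : ℝ) • ((1 + obs a b)ᴴ * (1 + obs a b)) := by
      rw [conjTranspose_add, hh, conjTranspose_one, mul_add, add_mul, add_mul, hs]
      ext i j
      simp only [Matrix.add_apply, Matrix.smul_apply, mul_one, one_mul, Complex.real_smul]; push_cast; ring
    rw [this]
    exact (posSemidef_conjTranspose_mul_self _).smul (by norm_num)

lemma obs_trace (l a b c d : ℝ) : trace ((obs a b ⊗ₖ obs c d) * rhoTilde l) =
    ((l * (0.24 / 8 * (2 * (a * c + b * d) + 6) + 0.76 / 64 * 36) + (1 - l) * (a * c + b * d) : ℝ) : ℂ) := by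
  rw [trace_rho, trace_iso, phi2_exp]
  have h1 : ∑ j, ∑ k, obs a b j k * obs c d j k = 2 * (a * c + b * d) + 6 := by
    simp only [Fin.sum_univ_eight]
    simp [obs]; ring
  have h2 : ∀ a b, (obs a b).trace = 6 := by
    intro a b
    simp only [trace, Fin.sum_univ_eight]
    simp [obs]; norm_num
  rw [h1, h2, h2]
  simp [obs]
  ring

lemma part2 (l : ℝ) (hl0 : 0 < l) (hl1 : l < 0.312) :
    (∃ A₀ A₁ B₀ B₁ : Matrix (Fin 8) (Fin 8) ℂ,
      IsDichotomicObservable A₀ ∧ IsDichotomicObservable A₁ ∧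
      IsDichotomicObservable B₀ ∧ IsDichotomicObservable B₁ ∧
      (2 : ℂ) < Matrix.trace
        (rhoTilde l * (A₀ ⊗ₖ B₀ + A₀ ⊗ₖ B₁ + A₁ ⊗ₖ B₀ - A₁ ⊗ₖ B₁))) := by
  refine ⟨obs 1 0, obs 0 1, obs 0.6 0.8, obs 0.8 (-0.6), obs_dich _ _ (by norm_num), obs_dich _ _ (by norm_num),
    obs_dich _ _ (by norm_num), obs_dich _ _ (by norm_num), ?_⟩
  rw [trace_mul_comm, sub_mul, add_mul, add_mul, trace_sub, trace_add, trace_add]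
  simp only [obs_trace]
  norm_cast
  norm_num at hl1 ⊢
  linarith

end Part2

section Part1Low

lemma trace_rank (C : Matrix (Fin 8) (Fin 8) ℂ) :
    ‖∑ i, C i i‖ ^ 2 ≤ C.rank * ∑ i, ∑ j, ‖C i j‖ ^ 2 := by
  classical
  let T := (WithLp.linearEquiv 2 ℂ (Fin 8 → ℂ)).symm
  let W : Submodule ℂ (EuclideanSpace ℂ (Fin 8)) :=
    (Submodule.span ℂ (Set.range C.col)).map T.toLinearMap
  have hW : Module.finrank ℂ W = C.rank := by
    rw [rank_eq_finrank_span_cols]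
    exact LinearEquiv.finrank_map_eq T _
  let c : Fin 8 → W := fun j => ⟨T (C.col j), Submodule.mem_map_of_mem (Submodule.subset_span ⟨j, rfl⟩)⟩
  let b := stdOrthonormalBasis ℂ W
  have hc : ∀ i j, C i j = ∑ m, inner ℂ (b m) (c j) * ((b m : W) : EuclideanSpace ℂ (Fin 8)) i := by
    intro i j
    have h := b.sum_repr' (c j)
    have h2 := congrArg (fun w : W => (w : EuclideanSpace ℂ (Fin 8)) i) h
    simp only [Submodule.coe_sum, Submodule.coe_smul, WithLp.ofLp_sum, WithLp.ofLp_smul, Finset.sum_apply, Pi.smul_apply, smul_eq_mul] at h2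
    rw [h2]; rfl
  have hn : ∀ j, ∑ m, ‖inner ℂ (b m) (c j)‖ ^ 2 = ∑ i, ‖C i j‖ ^ 2 := by
    intro j
    rw [b.sum_sq_norm_inner_right]
    rw [Submodule.coe_norm, EuclideanSpace.norm_sq_eq]
    rfl
  have hb : ∀ m, ∑ i, ‖((b m : W) : EuclideanSpace ℂ (Fin 8)) i‖ ^ 2 = 1 := by
    intro m
    rw [← EuclideanSpace.norm_sq_eq, ← Submodule.coe_norm, b.orthonormal.1 m]; norm_num
  have h1 : ‖∑ i, C i i‖ ≤ ∑ p : Fin 8 × Fin (Module.finrank ℂ W),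
      ‖inner ℂ (b p.2) (c p.1)‖ * ‖((b p.2 : W) : EuclideanSpace ℂ (Fin 8)) p.1‖ := by
    rw [Fintype.sum_prod_type]
    refine (norm_sum_le _ _).trans (Finset.sum_le_sum fun i _ => ?_)
    rw [hc i i]
    refine (norm_sum_le _ _).trans (Finset.sum_le_sum fun m _ => ?_)
    rw [norm_mul]
  calc ‖∑ i, C i i‖ ^ 2 ≤ _ := pow_le_pow_left₀ (norm_nonneg _) h1 2
    _ ≤ _ := Finset.sum_mul_sq_le_sq_mul_sq _ _ _
    _ = _ := by
      rw [Fintype.sum_prod_type, Fintype.sum_prod_type_right]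
      simp only [hn, hb]
      rw [Finset.sum_const, Finset.card_univ, Fintype.card_fin, hW, Finset.sum_comm]
      simp [mul_comm]

lemma low (r : ℕ) (ρ : Matrix (Fin 8 × Fin 8) (Fin 8 × Fin 8) ℂ) (h : SchmidtNumberLE ρ r) :
    (∑ i, ∑ j, ρ (i, i) (j, j)).re ≤ r * (∑ i, ∑ j, ρ (i, j) (i, j)).re := by
  obtain ⟨k, ψ, hψ, rfl⟩ := h
  have e1 : (∑ i, ∑ j, (∑ s, vecMulVec (ψ s) (star (ψ s))) (i, i) (j, j)).re = ∑ s, ‖∑ i, ψ s (i, i)‖ ^ 2 := by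
    have : (∑ i, ∑ j, (∑ s, vecMulVec (ψ s) (star (ψ s))) (i, i) (j, j)) =
        ((∑ s, ‖∑ i, ψ s (i, i)‖ ^ 2 : ℝ) : ℂ) := by
      push_cast
      simp_rw [Matrix.sum_apply, ← Complex.mul_conj', map_sum, Finset.sum_mul_sum]
      rw [Finset.sum_comm' (t' := Finset.univ) (s' := fun _ => Finset.univ) (by simp)]
      rw [Finset.sum_comm]
      simp_rw [Finset.sum_comm (s := (Finset.univ : Finset (Fin 8))) (t := (Finset.univ : Finset (Fin k)))]
      rfl
    rw [this, Complex.ofReal_re]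
  have e2 : (∑ i, ∑ j, (∑ s, vecMulVec (ψ s) (star (ψ s))) (i, j) (i, j)).re = ∑ s, ∑ i, ∑ j, ‖ψ s (i, j)‖ ^ 2 := by
    have : (∑ i, ∑ j, (∑ s, vecMulVec (ψ s) (star (ψ s))) (i, j) (i, j)) =
        ((∑ s, ∑ i, ∑ j, ‖ψ s (i, j)‖ ^ 2 : ℝ) : ℂ) := by
      push_cast
      simp_rw [Matrix.sum_apply, ← Complex.mul_conj']
      simp_rw [Finset.sum_comm (s := (Finset.univ : Finset (Fin 8))) (t := (Finset.univ : Finset (Fin k)))]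
      rfl
    rw [this, Complex.ofReal_re]
  rw [e1, e2, Finset.mul_sum]
  refine Finset.sum_le_sum fun s _ => ?_
  refine (trace_rank (Matrix.of fun i j => ψ s (i, j))).trans ?_
  refine mul_le_mul_of_nonneg_right (by exact_mod_cast hψ s) ?_
  positivity

lemma maxEnt_entry (p q : Fin 8 × Fin 8) : projME 8 p q = if p.1 = p.2 ∧ q.1 = q.2 then 1 / 8 else 0 := by
  have h8 : ((1 / Real.sqrt (8:ℕ) : ℝ) : ℂ) * ((1 / Real.sqrt (8:ℕ) : ℝ) : ℂ) = 1 / 8 := by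
    rw [← Complex.ofReal_mul, div_mul_div_comm, Real.mul_self_sqrt (by positivity)]; push_cast; norm_num
  unfold projME maxEnt
  rw [vecMulVec_apply, Pi.star_apply]
  by_cases h1 : p.1 = p.2 <;> by_cases h2 : q.1 = q.2
  · simp only [h1, h2, if_true, true_and, Complex.star_def, Complex.conj_ofReal]; exact h8
  all_goals simp [h1, h2]

lemma phi2_entry (p q : Fin 8 × Fin 8) : vecMulVec phi2 (star phi2) p q =
    if (p = (0,0) ∨ p = (1,1)) ∧ (q = (0,0) ∨ q = (1,1)) then 1 / 2 else 0 := by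
  have h2 : ((1 / Real.sqrt 2 : ℝ) : ℂ) * ((1 / Real.sqrt 2 : ℝ) : ℂ) = 1 / 2 := by
    rw [← Complex.ofReal_mul, div_mul_div_comm, Real.mul_self_sqrt (by positivity)]; push_cast; norm_num
  unfold phi2
  rw [vecMulVec_apply, Pi.star_apply]
  by_cases h1 : (p = (0,0) ∨ p = (1,1)) <;> by_cases h3 : (q = (0,0) ∨ q = (1,1))
  · simp only [if_pos h1, if_pos h3, if_pos (And.intro h1 h3), Complex.star_def, Complex.conj_ofReal]; exact h2
  · simp [h3]
  · simp [h1]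
  · simp [h3]

lemma not_le_two (l : ℝ) (hl0 : 0 < l) (r : ℕ) (hr : r ≤ 2) : ¬ SchmidtNumberLE (rhoTilde l) r := by
  intro h
  have h1 := low r _ h
  have ht : (∑ i, ∑ j, rhoTilde l (i, j) (i, j)) = 1 := by
    have := trace_rho l ((1 : Matrix (Fin 8) (Fin 8) ℂ) ⊗ₖ (1 : Matrix (Fin 8) (Fin 8) ℂ))
    rw [trace_iso, phi2_exp, one_kronecker_one, one_mul, trace, Fintype.sum_prod_type] at this
    simp only [diag_apply] at this
    rw [this]
    simp [Matrix.one_apply]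
    ring
  have hL : (∑ i, ∑ j, rhoTilde l (i, i) (j, j)) = ((2 + 0.015 * l : ℝ) : ℂ) := by
    have e : ∀ i j : Fin 8, rhoTilde l (i, i) (j, j) = (l : ℂ) * (0.24 / 8 + 0.76 / 64 * (if i = j then 1 else 0))
        + (1 - l) * (if (i = 0 ∨ i = 1) ∧ (j = 0 ∨ j = 1) then 1 / 2 else 0) := by
      intro i j
      unfold rhoTilde isoState
      simp only [Matrix.add_apply, Matrix.smul_apply, maxEnt_entry, phi2_entry, Matrix.one_apply, Prod.mk.injEq, and_self, if_true, smul_eq_mul]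
      push_cast
      norm_num
    simp_rw [e]
    simp only [Fin.sum_univ_eight]
    simp [Fin.ext_iff]
    ring
  rw [ht, hL, Complex.ofReal_re, Complex.one_re] at h1
  have : (r : ℝ) ≤ 2 := by exact_mod_cast hr
  linarith

end Part1Low

section Part1Up

lemma SNLE_of_sum {ι : Type*} [Fintype ι] (r : ℕ) (w : ι → ℝ) (ψ : ι → Fin 8 × Fin 8 → ℂ)
    (hw : ∀ i, 0 ≤ w i) (hψ : ∀ i, schmidtRank (ψ i) ≤ r) (ρ : Matrix (Fin 8 × Fin 8) (Fin 8 × Fin 8) ℂ)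
    (hρ : ρ = ∑ i, (w i : ℂ) • vecMulVec (ψ i) (star (ψ i))) : SchmidtNumberLE ρ r := by
  let e := Fintype.equivFin ι
  refine ⟨Fintype.card ι, fun s => ((Real.sqrt (w (e.symm s)) : ℝ) : ℂ) • ψ (e.symm s), ?_, ?_⟩
  · intro s
    refine le_trans ?_ (hψ (e.symm s))
    unfold schmidtRank
    have : (Matrix.of fun i j => (((Real.sqrt (w (e.symm s)) : ℝ) : ℂ) • ψ (e.symm s)) (i, j)) =
        ((((Real.sqrt (w (e.symm s)) : ℝ) : ℂ) • (1 : Matrix (Fin 8) (Fin 8) ℂ))) *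
          (Matrix.of fun i j => ψ (e.symm s) (i, j)) := by
      rw [Matrix.smul_mul, one_mul]; rfl
    rw [this]
    exact rank_mul_le_right _ _
  · rw [hρ, ← Equiv.sum_comp e.symm]
    refine Finset.sum_congr rfl fun s _ => ?_
    ext p q
    simp only [Matrix.smul_apply, vecMulVec_apply, Pi.star_apply, Pi.smul_apply, smul_eq_mul, star_mul', Complex.star_def, Complex.conj_ofReal]
    have : (w (e.symm s) : ℂ) = ((Real.sqrt (w (e.symm s)) : ℝ) : ℂ) * ((Real.sqrt (w (e.symm s)) : ℝ) : ℂ) := by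
      rw [← Complex.ofReal_mul, Real.mul_self_sqrt (hw _)]
    rw [this]; ring

lemma rank_factor (m : ℕ) (ψ : Fin 8 × Fin 8 → ℂ) (A B : Fin 8 → Fin m → ℂ)
    (h : ∀ i j, ψ (i, j) = ∑ s, A i s * B j s) : schmidtRank ψ ≤ m := by
  unfold schmidtRank
  have : (Matrix.of fun i j => ψ (i, j)) = (Matrix.of A) * (Matrix.of B)ᵀ := by
    ext i j; simp [mul_apply, h]
  rw [this]
  refine (rank_mul_le_left _ _).trans ?_
  refine (rank_le_width _).trans le_rfl

noncomputable def om : ℂ := ⟨-1/2, Real.sqrt 3 / 2⟩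
noncomputable def om3 : Fin 3 → ℂ := ![1, om, star om]

lemma om_sq : om * om = star om := by
  have := Real.mul_self_sqrt (show (0:ℝ) ≤ 3 by norm_num)
  apply Complex.ext
  · simp [om]; linarith
  · simp [om]; ring

lemma om_norm : om * star om = 1 := by
  have := Real.mul_self_sqrt (show (0:ℝ) ≤ 3 by norm_num)
  apply Complex.ext
  · simp [om]; linarith
  · simp [om]; ring

lemma om_norm' : star om * om = 1 := by rw [mul_comm, om_norm]

lemma om_sq' : star om * star om = om := by
  rw [← star_mul, om_sq, star_star]

lemma om3_mul (a b : Fin 3) : om3 a * star (om3 b) = om3 (a - b) := by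
  have h1 := om_sq
  have h2 := om_sq'
  have h3 := om_norm
  have h4 := om_norm'
  rw [Complex.star_def] at *
  fin_cases a <;> fin_cases b <;> simp [om3, h1, h2, h3, h4] <;> rfl

lemma om3_sum (a b : Fin 3) (h : ¬ (a = 0 ∧ b = 0)) : Complex.normSq (1 + om3 a + om3 b) ≤ 3 := by
  have := Real.mul_self_sqrt (show (0:ℝ) ≤ 3 by norm_num)
  fin_cases a <;> fin_cases b <;> simp [om3, om, Complex.normSq_apply] at h ⊢ <;> nlinarith

def ix : Fin 8 → Fin 3 := ![0,0,0,1,1,1,2,2]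
def iy : Fin 8 → Fin 3 := ![0,1,2,0,1,2,0,1]
def sid : Fin 8 → ZMod 57 := ![0,1,3,13,32,36,43,52]

noncomputable def vv (i : Fin 8) : Fin 3 → ℂ := ![1, om3 (ix i), om3 (iy i)]
noncomputable def gg (i j : Fin 8) : ℂ := ∑ m, vv i m * star (vv j m)

lemma gg_eq (i j : Fin 8) : gg i j = 1 + om3 (ix i - ix j) + om3 (iy i - iy j) := by
  rw [← om3_mul, ← om3_mul]
  simp [gg, vv, Fin.sum_univ_three]

lemma gg_diag (i : Fin 8) : gg i i = 3 := by
  rw [gg_eq, sub_self, sub_self]; simp [om3]; norm_num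

lemma gg_off (i j : Fin 8) (h : i ≠ j) : Complex.normSq (gg i j) ≤ 3 := by
  rw [gg_eq]
  apply om3_sum
  rw [sub_eq_zero, sub_eq_zero]
  revert h; revert i j; decide

lemma sidon : ∀ i j k m : Fin 8, sid i - sid j - sid k + sid m = 0 → (i = j ∧ k = m) ∨ (i = k ∧ j = m) := by
  decide +kernel

noncomputable def th (t : ZMod 57) (i : Fin 8) : ℂ := ZMod.stdAddChar (t * sid i)
noncomputable def pt (t : ZMod 57) : Fin 8 × Fin 8 → ℂ := fun p => th t p.1 * star (th t p.2) * gg p.1 p.2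

lemma pt_rank (t : ZMod 57) : schmidtRank (pt t) ≤ 3 := by
  refine rank_factor 3 _ (fun i m => th t i * vv i m) (fun j m => star (th t j) * star (vv j m)) ?_
  intro i j
  simp only [pt, gg, Finset.mul_sum]
  exact Finset.sum_congr rfl fun m _ => by ring

lemma th_mul (t : ZMod 57) (i j k m : Fin 8) :
    th t i * star (th t j) * star (th t k * star (th t m)) = ZMod.stdAddChar (t * (sid i - sid j - sid k + sid m)) := by
  have hs : ∀ x : ZMod 57, star (ZMod.stdAddChar x) = (ZMod.stdAddChar (-x) : ℂ) := by
    intro x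
    rw [AddChar.map_neg_eq_conj]; rfl
  unfold th
  rw [star_mul, star_star, hs, hs, ← AddChar.map_add_eq_mul, ← AddChar.map_add_eq_mul, ← AddChar.map_add_eq_mul]
  congr 1; ring

lemma pt_sum (i j k m : Fin 8) : ∑ t, vecMulVec (pt t) (star (pt t)) (i, j) (k, m) =
    if (i = j ∧ k = m) ∨ (i = k ∧ j = m) then 57 * (gg i j * star (gg k m)) else 0 := by
  have : ∀ t, vecMulVec (pt t) (star (pt t)) (i, j) (k, m) =
      ZMod.stdAddChar (t * (sid i - sid j - sid k + sid m)) * (gg i j * star (gg k m)) := by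
    intro t
    rw [← th_mul, vecMulVec_apply, Pi.star_apply]
    simp only [pt, star_mul, star_star]; ring
  simp_rw [this]
  rw [← Finset.sum_mul, AddChar.sum_mulShift _ (ZMod.isPrimitive_stdAddChar 57)]
  by_cases h : (i = j ∧ k = m) ∨ (i = k ∧ j = m)
  · have h0 : sid i - sid j - sid k + sid m = 0 := by
      rcases h with ⟨rfl, rfl⟩ | ⟨rfl, rfl⟩ <;> ring
    rw [if_pos h, if_pos h0, ZMod.card]; norm_num
  · rw [if_neg h, if_neg (fun h' => h (sidon _ _ _ _ h'))]; simp

noncomputable def ww (i j : Fin 8) : ℝ := 0.76 / 64 - if i = j then 0 else 0.24 / 72 * Complex.normSq (gg i j)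

lemma ww_nonneg (i j : Fin 8) : 0 ≤ ww i j := by
  unfold ww
  split_ifs with h
  · norm_num
  · have := gg_off i j h
    norm_num; linarith

lemma iso_decomp : isoState 8 0.24 = ∑ t, ((0.24 / 72 / 57 : ℝ) : ℂ) • vecMulVec (pt t) (star (pt t)) +
    ∑ q : Fin 8 × Fin 8, (ww q.1 q.2 : ℂ) • vecMulVec (Pi.single q (1:ℂ)) (star (Pi.single q (1:ℂ))) := by
  ext ⟨i, j⟩ ⟨k, m⟩
  have hs : (∑ q : Fin 8 × Fin 8, (ww q.1 q.2 : ℂ) • vecMulVec (Pi.single q (1:ℂ)) (star (Pi.single q (1:ℂ)))) (i, j) (k, m)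
      = if (i = k ∧ j = m) then (ww i j : ℂ) else 0 := by
    rw [Matrix.sum_apply, Finset.sum_eq_single (i, j)]
    · simp only [Matrix.smul_apply, vecMulVec_apply, Pi.star_apply, Pi.single_eq_same, smul_eq_mul, one_mul]
      by_cases h : i = k ∧ j = m
      · obtain ⟨rfl, rfl⟩ := h; simp
      · rw [if_neg h, Pi.single_eq_of_ne]
        · simp
        · intro h'; simp only [Prod.mk.injEq] at h'; exact h ⟨h'.1.symm, h'.2.symm⟩
    · intro q _ hq
      simp [vecMulVec_apply, Pi.single_eq_of_ne (Ne.symm hq)]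
    · simp
  rw [Matrix.add_apply, hs, ← Finset.smul_sum, Matrix.smul_apply, Matrix.sum_apply, pt_sum]
  unfold isoState
  rw [Matrix.add_apply, Matrix.smul_apply, Matrix.smul_apply, maxEnt_entry, Matrix.one_apply]
  simp only [Prod.mk.injEq, smul_eq_mul]
  by_cases h1 : i = j ∧ k = m
  · obtain ⟨rfl, rfl⟩ := h1
    simp only [and_self, true_or, if_true, gg_diag, ww]
    by_cases h2 : i = k
    · simp only [h2, if_true]; push_cast; norm_num
    · simp only [h2, if_false]; push_cast; norm_num
  · by_cases h2 : i = k ∧ j = m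
    · obtain ⟨rfl, rfl⟩ := h2
      have h3 : i ≠ j := fun h => h1 ⟨h, h⟩
      simp only [and_self, h3, or_true, if_true, if_false, ww]
      push_cast
      rw [Complex.star_def, Complex.mul_conj]
      ring
    · simp [h1, h2]

lemma single_rank (q : Fin 8 × Fin 8) : schmidtRank (Pi.single q (1:ℂ)) ≤ 3 := by
  refine (rank_factor 1 _ (fun i _ => if i = q.1 then 1 else 0) (fun j _ => if j = q.2 then 1 else 0) ?_).trans (by norm_num)
  intro i j
  obtain ⟨a, b⟩ := q
  simp only [Pi.single_apply, Prod.mk.injEq]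
  by_cases h1 : i = a <;> by_cases h2 : j = b <;> simp [h1, h2]

lemma phi2_rank : schmidtRank phi2 ≤ 3 := by
  refine (rank_factor 2 _ (fun i m => if i.val = m.val then ((1 / Real.sqrt 2 : ℝ) : ℂ) else 0)
    (fun j m => if j.val = m.val then 1 else 0) ?_).trans (by norm_num)
  intro i j
  unfold phi2
  rw [Fin.sum_univ_two]
  simp only [Prod.mk.injEq, Fin.ext_iff]
  rcases Nat.eq_zero_or_pos i.val with hi | hi
  · by_cases hj : j.val = 0 <;> simp [hi, hj]
  · by_cases hi1 : i.val = 1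
    · by_cases hj : j.val = 1 <;> simp [hi1, hj]
    · simp [hi.ne', hi1]

lemma le_three (l : ℝ) (hl0 : 0 < l) (hl1 : l < 1) : SchmidtNumberLE (rhoTilde l) 3 := by
  refine SNLE_of_sum (ι := Unit ⊕ (ZMod 57 ⊕ (Fin 8 × Fin 8))) 3
    (Sum.elim (fun _ => 1 - l) (Sum.elim (fun _ => l * (0.24 / 72 / 57)) (fun q => l * ww q.1 q.2)))
    (Sum.elim (fun _ => phi2) (Sum.elim pt (fun q => Pi.single q (1:ℂ)))) ?_ ?_ _ ?_
  · rintro (_ | _ | q)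
    · simp only [Sum.elim_inl]; linarith
    · simp only [Sum.elim_inl, Sum.elim_inr]; positivity
    · simp only [Sum.elim_inr]; exact mul_nonneg hl0.le (ww_nonneg _ _)
  · rintro (_ | t | q)
    · exact phi2_rank
    · exact pt_rank t
    · exact single_rank q
  · rw [Fintype.sum_sum_type, Fintype.sum_sum_type]
    simp only [Sum.elim_inl, Sum.elim_inr, Complex.ofReal_mul, mul_smul, ← Finset.smul_sum]
    unfold rhoTilde
    rw [iso_decomp, smul_add, ← Finset.smul_sum]
    simp only [Finset.univ_unique, Finset.sum_singleton, Complex.ofReal_mul, mul_smul]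
    rw [add_comm]

lemma part1 (l : ℝ) (hl0 : 0 < l) (hl1 : l < 0.312) : schmidtNumber (rhoTilde l) = 3 := by
  have h3 : SchmidtNumberLE (rhoTilde l) 3 := le_three l hl0 (by norm_num at hl1 ⊢; linarith)
  unfold schmidtNumber
  refine le_antisymm (Nat.sInf_le h3) ?_
  have := Nat.sInf_mem (s := {r | SchmidtNumberLE (rhoTilde l) r}) ⟨3, h3⟩
  by_contra hc
  exact not_le_two l hl0 _ (by omega) this

end Part1Up

/-- Corollary 1: for `0 < λ < 0.312`, the state `ρ̃(λ)` has Schmidt number 3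
and is Bell-nonlocal, yet its correlations in any two-output Bell scenario with arbitrary
dichotomic POVMs can be simulated using shared randomness together with the Schmidt-rank-2
state `|φ₂⁺⟩`. -/
theorem nonlocal_state_schmidt_number_not_certifiable_two_output_povm
    (l : ℝ) (hl0 : 0 < l) (hl1 : l < 0.312) :
    schmidtNumber (rhoTilde l) = 3 ∧
    (∃ A₀ A₁ B₀ B₁ : Matrix (Fin 8) (Fin 8) ℂ,
      IsDichotomicObservable A₀ ∧ IsDichotomicObservable A₁ ∧
      IsDichotomicObservable B₀ ∧ IsDichotomicObservable B₁ ∧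
      (2 : ℂ) < Matrix.trace
        (rhoTilde l * (A₀ ⊗ₖ B₀ + A₀ ⊗ₖ B₁ + A₁ ⊗ₖ B₀ - A₁ ⊗ₖ B₁))) ∧
    (∀ (X Y : Type) [Fintype X] [Fintype Y]
      (E : X → Matrix (Fin 8) (Fin 8) ℂ) (F : Y → Matrix (Fin 8) (Fin 8) ℂ),
      (∀ x, IsEffect (E x)) → (∀ y, IsEffect (F y)) →
      ∃ (nΛ : ℕ) (q : Fin nΛ → ℝ) (P : Fin 2 → X → Fin nΛ → ℝ)
        (Q : Fin 2 → Y → Fin nΛ → ℝ),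
        (∀ μ, 0 ≤ q μ) ∧ (∑ μ, q μ = 1) ∧
        (∀ a x μ, 0 ≤ P a x μ) ∧ (∀ x μ, ∑ a, P a x μ = 1) ∧
        (∀ b y μ, 0 ≤ Q b y μ) ∧ (∀ y μ, ∑ b, Q b y μ = 1) ∧
        (∀ (a b : Fin 2) x y,
          Matrix.trace
            (((if a = 0 then E x else 1 - E x) ⊗ₖ (if b = 0 then F y else 1 - F y)) *
              rhoTilde l) =
            ((l * ∑ μ, q μ * P a x μ * Q b y μ : ℝ) : ℂ) +
            ((1 - l : ℝ) : ℂ) *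
              (star phi2 ⬝ᵥ
                (((if a = 0 then E x else 1 - E x) ⊗ₖ (if b = 0 then F y else 1 - F y)) *ᵥ
                  phi2)))) := by
  refine ⟨part1 l hl0 hl1, part2 l hl0 hl1, ?_⟩
  intro X Y _ _ E F hE hF
  obtain ⟨n, q, P, Q, h1, h2, h3, h4, h5, h6, h7⟩ := lhv X Y E F hE hF
  refine ⟨n, q, P, Q, h1, h2, h3, h4, h5, h6, ?_⟩
  intro a b x y
  rw [trace_rho, h7, Complex.ofReal_mul]
end
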